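/- For every universal monotone machine U, the probability μ(INF(U)) that the output of U on a random infinite binary input is infinite is a 2-random 0'-right-c.e. real. Conversely, every 2-random 0'-right-c.e. real α ∈ (0,1) equals μ(INF(U)) for some universal monotone machine U. -/

import Mathlib

open scoped Classical
open MeasureTheory

namespace RandProb

/-- Cantor space: the space of infinite binary sequences. -/
abbrev Cantor := ℕ → Bool

/-! ### Oracle partial recursive functions, via codes -/

/-- Codes for partial recursive functions with access to an oracle `O : ℕ → ℕ`.
These codes play the role of (oracle) Turing machines. -/
inductive CodeO : Type
  | zero : CodeO
  | succ : CodeO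
  | left : CodeO
  | right : CodeO
  | oracle : CodeO
  | pair : CodeO → CodeO → CodeO
  | comp : CodeO → CodeO → CodeO
  | prec : CodeO → CodeO → CodeO
  | rfind' : CodeO → CodeO

/-- Evaluation of an oracle code with (total) oracle `O`. -/
def CodeO.eval (O : ℕ → ℕ) : CodeO → ℕ →. ℕ
  | .zero => pure 0
  | .succ => Nat.succ
  | .left => ↑fun n : ℕ => n.unpair.1
  | .right => ↑fun n : ℕ => n.unpair.2
  | .oracle => ↑fun n : ℕ => O n
  | .pair cf cg => fun n => Nat.pair <$> cf.eval O n <*> cg.eval O n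
  | .comp cf cg => fun n => cg.eval O n >>= cf.eval O
  | .prec cf cg =>
    Nat.unpaired fun a n =>
      n.rec (cf.eval O a) fun y IH => do
        let i ← IH
        cg.eval O (Nat.pair a (Nat.pair y i))
  | .rfind' cf =>
    Nat.unpaired fun a m =>
      (Nat.rfind fun n => (fun m => m = 0) <$> cf.eval O (Nat.pair a (n + m))).map (· + m)

/-- A canonical injective numbering of oracle codes. -/
def CodeO.encode : CodeO → ℕ
  | .zero => 0
  | .succ => 1
  | .left => 2
  | .right => 3
  | .oracle => 4
  | .pair cf cg => 2 * (2 * Nat.pair cf.encode cg.encode) + 5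
  | .comp cf cg => 2 * (2 * Nat.pair cf.encode cg.encode + 1) + 5
  | .prec cf cg => 2 * (2 * Nat.pair cf.encode cg.encode) + 6
  | .rfind' cf => 2 * (2 * cf.encode + 1) + 6

/-- The Turing jump of an oracle: the halting problem relative to `O`,
as a `{0,1}`-valued function. -/
noncomputable def jump (O : ℕ → ℕ) : ℕ → ℕ := fun e =>
  if ∃ c : CodeO, c.encode = e ∧ (c.eval O e).Dom then 1 else 0

/-- `iterJump n` is `∅^(n)`, the `n`-th iterate of the halting problem (as an oracle). -/
noncomputable def iterJump : ℕ → ℕ → ℕ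
  | 0 => fun _ => 0
  | n + 1 => jump (iterJump n)

/-- `S ⊆ ℕ` is computably enumerable relative to the oracle `O`. -/
def CeIn (O : ℕ → ℕ) (S : Set ℕ) : Prop := ∃ c : CodeO, S = {m | (c.eval O m).Dom}

/-- The left Dedekind cut of `α` (as a set of codes of rationals) is c.e. in `O`. -/
def LeftCeIn (O : ℕ → ℕ) (α : ℝ) : Prop :=
  CeIn O {m | ∃ q : ℚ, Encodable.encode q = m ∧ (q : ℝ) < α}

/-- The right Dedekind cut of `α` (as a set of codes of rationals) is c.e. in `O`. -/
def RightCeIn (O : ℕ → ℕ) (α : ℝ) : Prop :=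
  CeIn O {m | ∃ q : ℚ, Encodable.encode q = m ∧ α < (q : ℝ)}

/-! ### Martin-Löf randomness for real numbers -/

/-- The `i`-th component of a Martin-Löf test coded by the set `W ⊆ ℕ`:
the union of all open rational intervals whose codes are enumerated into the
`i`-th section of `W`. -/
def testSet (W : Set ℕ) (i : ℕ) : Set ℝ :=
  {x | ∃ p q : ℚ, Nat.pair i (Encodable.encode (p, q)) ∈ W ∧ (p : ℝ) < x ∧ x < (q : ℝ)}

/-- `α` is Martin-Löf random relative to the oracle `O`. -/
def MLRandomIn (O : ℕ → ℕ) (α : ℝ) : Prop :=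
  ∀ W : Set ℕ, CeIn O W →
    (∀ i, volume (testSet W i) ≤ ENNReal.ofReal ((2 : ℝ)⁻¹ ^ i)) →
    ∃ i, α ∉ testSet W i

/-- `α` is `n`-random: Martin-Löf random relative to `∅^(n-1)`. -/
def NRandom (n : ℕ) (α : ℝ) : Prop := MLRandomIn (iterJump (n - 1)) α

/-! ### The uniform measure on Cantor space -/

/-- The binary digits of a real number (meaningful on `[0,1)`). -/
noncomputable def digits (x : ℝ) : Cantor := fun n => decide (⌊x * 2 ^ (n + 1)⌋ % 2 = 1)

/-- The uniform (Lebesgue) product measure on Cantor space, obtained as the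
pushforward of Lebesgue measure on `[0,1)` under the binary-digit map. -/
noncomputable def mu : Measure Cantor :=
  Measure.map digits (volume.restrict (Set.Ico (0 : ℝ) 1))

/-- The uniform measure of a set of elements of Cantor space, as a real number. -/
noncomputable def muR (S : Set Cantor) : ℝ := (mu S).toReal

/-! ### Strings, prefixes and cylinders -/

/-- The length-`n` initial segment of `X ∈ 2^ω`, as a finite binary string. -/
def initSeg (X : Cantor) (n : ℕ) : List Bool := (List.range n).map X

/-- `⟦S⟧`: the elements of Cantor space having a prefix in the set of strings `S`. -/
def cyl (S : Set (List Bool)) : Set Cantor := {X | ∃ n, initSeg X n ∈ S}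

/-- A set of strings is prefix-free if none of its elements properly extends another. -/
def IsPrefixFree (S : Set (List Bool)) : Prop := ∀ σ ∈ S, ∀ τ ∈ S, σ <+: τ → σ = τ

/-- A set of strings is upward closed if it is closed under taking extensions. -/
def UpClosed (S : Set (List Bool)) : Prop := ∀ σ ∈ S, ∀ τ, σ <+: τ → τ ∈ S

/-- Two strings are compatible if one is a prefix of the other. -/
def Compatible (σ τ : List Bool) : Prop := σ <+: τ ∨ τ <+: σ

/-! ### Oracle machines -/

/-- An element of Cantor space viewed as a `{0,1}`-valued oracle. -/
def oX (X : Cantor) : ℕ → ℕ := fun n => cond (X n) 1 0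

/-- `evalO X c n`: the (possibly divergent) output of the oracle machine `c`
on input `n` with oracle `X`. -/
def evalO (X : Cantor) (c : CodeO) (n : ℕ) : Part ℕ := c.eval (oX X) n

/-- The oracle obtained by writing the string `ρ` before the bits of `X`. -/
def prepend (ρ : List Bool) (X : Cantor) : Cantor := fun n =>
  if n < ρ.length then ρ.getD n false else X (n - ρ.length)

/-- `X ∈ 2^ω` extends the finite string `ρ`. -/
def Extends (X : Cantor) (ρ : List Bool) : Prop := initSeg X ρ.length = ρ

/-- `u` is a universal oracle machine: some effective, prefix-free translation
`c ↦ σ_c` satisfies `u(σ_c * X, n) ≃ c(X, n)` for all machines `c`. -/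
def UniversalOM (u : CodeO) : Prop :=
  ∃ σ : CodeO → List Bool,
    (∃ f : ℕ → ℕ, Computable f ∧ ∀ c : CodeO, f c.encode = Encodable.encode (σ c)) ∧
    IsPrefixFree (Set.range σ) ∧
    ∀ (c : CodeO) (X : Cantor) (n : ℕ), evalO (prepend (σ c) X) u n = evalO X c n

/-- `TOT(c)`: the oracles `X` such that the function `c(X)` is total. -/
def TOT (c : CodeO) : Set Cantor := {X | ∀ n, (evalO X c n).Dom}

/-- The domain of the partial function `c(X)`. -/
def domSet (c : CodeO) (X : Cantor) : Set ℕ := {n | (evalO X c n).Dom}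

/-- The range of the partial function `c(X)`. -/
def ranSet (c : CodeO) (X : Cantor) : Set ℕ := {v | ∃ n, v ∈ evalO X c n}

/-- `INF(c)`: the oracles `X` such that `c(X)` has infinite domain. -/
def INF (c : CodeO) : Set Cantor := {X | (domSet c X).Infinite}

/-- `COF(c)`: the oracles `X` such that `c(X)` has cofinite domain. -/
def COF (c : CodeO) : Set Cantor := {X | (domSet c X)ᶜ.Finite}

/-- `COM(c)`: the oracles `X` such that `c(X)` has computable domain. -/
def COM (c : CodeO) : Set Cantor := {X | ComputablePred fun n => n ∈ domSet c X}

/-- The characteristic function of a set of naturals. -/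
noncomputable def chi (A : Set ℕ) : ℕ → ℕ := fun n => if n ∈ A then 1 else 0

/-- Turing reducibility between sets of naturals. -/
def TuringLEs (B A : Set ℕ) : Prop := ∃ c : CodeO, ∀ n, c.eval (chi A) n = Part.some (chi B n)

/-- The halting problem `∅'` as a set of naturals. -/
noncomputable def HaltingSet : Set ℕ := {e | iterJump 1 e = 1}

/-- `COMPL(c)`: the oracles `X` such that the domain of `c(X)` computes the halting problem. -/
noncomputable def COMPL (c : CodeO) : Set Cantor := {X | TuringLEs HaltingSet (domSet c X)}

/-- Turing reducibility between total functions on ℕ. -/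
def TuringLEf (f g : ℕ → ℕ) : Prop := ∃ c : CodeO, ∀ n, c.eval g n = Part.some (f n)

/-- A real number viewed as an oracle, via its binary expansion. -/
noncomputable def realOracle (α : ℝ) : ℕ → ℕ := oX (digits α)

/-- Two reals have Turing-incomparable degrees. -/
noncomputable def TIncompReal (α β : ℝ) : Prop :=
  ¬ TuringLEf (realOracle α) (realOracle β) ∧ ¬ TuringLEf (realOracle β) (realOracle α)

/-! ### Arithmetical hierarchy -/

/-- Evaluation with the trivial (empty) oracle: ordinary partial recursion. -/
def eval0 (c : CodeO) : ℕ →. ℕ := c.eval fun _ => 0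

/-- `SigmaNumIdx n c` is the `Σ^0_{n+1}` subset of `ℕ` with index `c`. -/
def SigmaNumIdx : ℕ → CodeO → Set ℕ
  | 0, c => {m | (eval0 c m).Dom}
  | n + 1, c => {m | ∃ k, Nat.pair m k ∉ SigmaNumIdx n c}

/-- `S ⊆ ℕ` is `Σ^0_n` (intended for `n ≥ 1`). -/
def SigmaN (n : ℕ) (S : Set ℕ) : Prop := ∃ c : CodeO, S = SigmaNumIdx (n - 1) c

/-- The set of codes of the elements of a set of binary strings. -/
def strCodes (S : Set (List Bool)) : Set ℕ := {m | ∃ σ ∈ S, Encodable.encode σ = m}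

/-- A set of binary strings is `Σ^0_n`. -/
def SigmaStr (n : ℕ) (S : Set (List Bool)) : Prop := SigmaN n (strCodes S)

/-- A set of binary strings is `Π^0_n`: its complement is `Σ^0_n`. -/
def PiStr (n : ℕ) (S : Set (List Bool)) : Prop := SigmaStr n Sᶜ

/-- A set of binary strings is c.e. relative to the oracle `O`. -/
def CeStrIn (O : ℕ → ℕ) (S : Set (List Bool)) : Prop := CeIn O (strCodes S)

/-- `SigmaClassIdx n c m` is the `Σ^0_{n+1}` class of elements of Cantor space
with index `c` and parameter `m`. -/
def SigmaClassIdx : ℕ → CodeO → ℕ → Set Cantor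
  | 0, c, m => {X | (evalO X c m).Dom}
  | n + 1, c, m => {X | ∃ k, X ∉ SigmaClassIdx n c (Nat.pair m k)}

/-! ### Monotone machines -/

/-- A monotone machine: a partial computable, monotone map on finite binary strings. -/
structure MonoMachine where
  f : List Bool →. List Bool
  partrec : Partrec f
  mono : ∀ ⦃σ τ a b : List Bool⦄, σ <+: τ → a ∈ f σ → b ∈ f τ → a <+: b

/-- The oracles `X` such that the output of the monotone machine on `X` is infinite. -/
def MonoINF (M : MonoMachine) : Set Cantor :=
  {X | ∀ k, ∃ n a, a ∈ M.f (initSeg X n) ∧ k ≤ a.length}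

/-- The `k`-th bit of the output `M(X)` of a monotone machine is `b`. -/
def MonoMachine.hasBit (M : MonoMachine) (X : Cantor) (k : ℕ) (b : Bool) : Prop :=
  ∃ n a, a ∈ M.f (initSeg X n) ∧ a[k]? = some b

/-- `U` is a universal monotone machine. -/
def UniversalMono (U : MonoMachine) : Prop :=
  ∃ (M : ℕ → MonoMachine) (σ : ℕ → List Bool),
    Partrec₂ (fun (e : ℕ) (τ : List Bool) => (M e).f τ) ∧
    (∀ V : MonoMachine, ∃ e, (M e).f = V.f) ∧
    Computable σ ∧ IsPrefixFree (Set.range σ) ∧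
    ∀ e τ, U.f (σ e ++ τ) = (M e).f τ

/-! ### Infinitary self-delimiting machines -/

/-- Chaitin's infinitary self-delimiting machines: `f σ n` is the `n`-th approximation
of the output on program `σ` (`none` meaning divergence); the convergence relation is
decidable, approximations are monotone, and machines are self-delimiting. -/
structure InfMachine where
  f : List Bool → ℕ → Option (List Bool)
  computable : Computable₂ f
  mono : ∀ σ m n a, n < m → f σ m = some a → ∃ b, f σ n = some b ∧ b <+: a
  sd : ∀ σ τ n a, f σ n = some a → f (σ ++ τ) n = some a

/-- `M^∞(σ)↓`: all approximations converge. -/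
def InfMachine.domInf (M : InfMachine) (σ : List Bool) : Prop := ∀ n, M.f σ n ≠ none

/-- The domain of `M^∞`. -/
def InfMachine.DOM (M : InfMachine) : Set (List Bool) := {σ | M.domInf σ}

/-- The output `M^∞(σ)` is infinite (a stream). -/
def InfMachine.outInf (M : InfMachine) (σ : List Bool) : Prop :=
  ∀ k, ∃ n a, M.f σ n = some a ∧ k ≤ a.length

/-- `FIN(M^∞)`: programs in the domain with finite output. -/
def InfMachine.FIN (M : InfMachine) : Set (List Bool) := {σ | M.domInf σ ∧ ¬ M.outInf σ}

/-- `INF(M^∞)`: programs in the domain with infinite output. -/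
def InfMachine.INF (M : InfMachine) : Set (List Bool) := {σ | M.domInf σ ∧ M.outInf σ}

/-- The `k`-th bit of the output `M^∞(σ)` is `b`. -/
def InfMachine.hasBit (M : InfMachine) (σ : List Bool) (k : ℕ) (b : Bool) : Prop :=
  ∃ n a, M.f σ n = some a ∧ a[k]? = some b

/-- The domain of the prefix-free machine `M^*`: minimal strings in the domain of `M^∞`. -/
def InfMachine.DOMstar (M : InfMachine) : Set (List Bool) :=
  {σ | M.domInf σ ∧ ∀ τ, τ <+: σ → τ ≠ σ → ¬ M.domInf τ}

/-- Programs whose output is a stream with a tail of 1s. -/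
def InfMachine.COFout (M : InfMachine) : Set (List Bool) :=
  {σ | M.domInf σ ∧ M.outInf σ ∧ ∃ t, ∀ k, t ≤ k → M.hasBit σ k true}

/-- `A^∞(σ) ≃ B^∞(τ)`: both converge or both diverge, with equal outputs. -/
def InfAgree (A : InfMachine) (σ : List Bool) (B : InfMachine) (τ : List Bool) : Prop :=
  (A.domInf σ ↔ B.domInf τ) ∧ (A.domInf σ → ∀ k b, (A.hasBit σ k b ↔ B.hasBit τ k b))

/-- `U` is a universal infinitary self-delimiting machine. -/
def UniversalInf (U : InfMachine) : Prop :=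
  ∃ (M : ℕ → InfMachine) (σ : ℕ → List Bool),
    Computable (fun p : ℕ × List Bool × ℕ => (M p.1).f p.2.1 p.2.2) ∧
    (∀ V : InfMachine, ∃ e, ∀ τ, InfAgree (M e) τ V τ) ∧
    Computable σ ∧ IsPrefixFree (Set.range σ) ∧
    ∀ e τ, InfAgree U (σ e ++ τ) (M e) τ

end RandProb

namespace RandProb

/-!
A real is handled through its right cut: being `∅'`-right-c.e. amounts to the dyadic upper bounds
forming a `Σ₂` set.

Let `β` have a `Σ₂` right cut. Enumerating that cut, a monotone machine can print forever exactly on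
the binary expansions of the reals below `β`, up to a null set, so `β` is an infinity probability.
A universal `U` simulates such a machine below some string of length `c`,
whence `μ(INF U) = β / 2 ^ c + γ` where `γ` again has a `Σ₂` right cut. If `β` is random then so is
the sum: a test for the sum is pulled back to a test for `β`, following monotone approximations of
`β` and `γ` until the sum is known to lie in a prescribed cell.

Conversely, let `α` be 2-random with `Σ₂` right cut and `β = μ(INF U)` for some universal `U`. The
places where the approximation to `α` has not yet dropped as much as `2 ^ (-c)` times that to `β`
form, as `c` varies, a Martin-Löf test (Kučera–Slaman). As `α` escapes the test,
`α + (1 - β) / 2 ^ c` has a `Σ₂` right cut for a large `c`, so it is the infinity probability of a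
monotone machine `V` that prints forever below `0 ^ c`; running `U` below `0 ^ c` instead makes
`V` universal and lowers its infinity probability to `α`.
-/

attribute [fun_prop] Primrec PrimrecPred
attribute [fun_prop] Primrec.id Primrec.const Primrec.comp Primrec.pair Primrec.fst Primrec.snd
  Primrec.unpair Primrec.encode Primrec.decode Primrec.option_isSome Primrec.list_length
  Primrec.list_range
attribute [fun_prop] PrimrecPred.comp PrimrecPred.not PrimrecPred.and PrimrecPred.or

section PrimitiveRecursion

variable {α β γ : Type*} [Primcodable α] [Primcodable β] [Primcodable γ]

@[fun_prop]
theorem primrec_add {f g : α → ℕ} (hf : Primrec f) (hg : Primrec g) :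
    Primrec fun x => f x + g x := Primrec.nat_add.comp hf hg

@[fun_prop]
theorem primrec_sub {f g : α → ℕ} (hf : Primrec f) (hg : Primrec g) :
    Primrec fun x => f x - g x := Primrec.nat_sub.comp hf hg

@[fun_prop]
theorem primrec_mul {f g : α → ℕ} (hf : Primrec f) (hg : Primrec g) :
    Primrec fun x => f x * g x := Primrec.nat_mul.comp hf hg

@[fun_prop]
theorem primrec_div {f g : α → ℕ} (hf : Primrec f) (hg : Primrec g) :
    Primrec fun x => f x / g x := Primrec.nat_div.comp hf hg

@[fun_prop]
theorem primrec_mod {f g : α → ℕ} (hf : Primrec f) (hg : Primrec g) :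
    Primrec fun x => f x % g x := Primrec.nat_mod.comp hf hg

@[fun_prop]
theorem primrec_pow {f g : α → ℕ} (hf : Primrec f) (hg : Primrec g) :
    Primrec fun x => f x ^ g x := (Primrec₂.unpaired'.1 Nat.Primrec.pow).comp hf hg

@[fun_prop]
theorem primrec_natPair {f g : α → ℕ} (hf : Primrec f) (hg : Primrec g) :
    Primrec fun x => Nat.pair (f x) (g x) := Primrec₂.natPair.comp hf hg

@[fun_prop]
theorem primrec_cons {f : α → β} {g : α → List β} (hf : Primrec f) (hg : Primrec g) :
    Primrec fun x => f x :: g x := Primrec.list_cons.comp hf hg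

@[fun_prop]
theorem primrec_append {f g : α → List β} (hf : Primrec f) (hg : Primrec g) :
    Primrec fun x => f x ++ g x := Primrec.list_append.comp hf hg

@[fun_prop]
theorem primrec_getD {f : α → List β} {g : α → ℕ} (d : β) (hf : Primrec f) (hg : Primrec g) :
    Primrec fun x => (f x).getD (g x) d := (Primrec.list_getD d).comp hf hg

@[fun_prop]
theorem primrec_take {f : α → List β} {g : α → ℕ} (hf : Primrec f) (hg : Primrec g) :
    Primrec fun x => (f x).take (g x) := Primrec.list_take.comp hg hf

@[fun_prop]
theorem primrec_drop {f : α → List β} {g : α → ℕ} (hf : Primrec f) (hg : Primrec g) :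
    Primrec fun x => (f x).drop (g x) := Primrec.list_drop.comp hg hf

@[fun_prop]
theorem primrec_map {f : α → List β} {g : α → β → γ} (hf : Primrec f)
    (hg : Primrec fun z : α × β => g z.1 z.2) : Primrec fun x => (f x).map (g x) :=
  Primrec.list_map hf hg.to₂

@[fun_prop]
theorem primrec_ite {p : α → Prop} [DecidablePred p] {f g : α → β} (hp : PrimrecPred p)
    (hf : Primrec f) (hg : Primrec g) : Primrec fun x => if p x then f x else g x :=
  Primrec.ite hp hf hg

@[fun_prop]
theorem primrec_decide {p : α → Prop} [DecidablePred p] (hp : PrimrecPred p) :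
    Primrec fun x => decide (p x) := hp.decide

@[fun_prop]
theorem primrecPred_le {f g : α → ℕ} (hf : Primrec f) (hg : Primrec g) :
    PrimrecPred fun x => f x ≤ g x := Primrec.nat_le.comp hf hg

@[fun_prop]
theorem primrecPred_lt {f g : α → ℕ} (hf : Primrec f) (hg : Primrec g) :
    PrimrecPred fun x => f x < g x := Primrec.nat_lt.comp hf hg

@[fun_prop]
theorem primrecPred_eq {f g : α → β} (hf : Primrec f) (hg : Primrec g) :
    PrimrecPred fun x => f x = g x := Primrec.eq.comp hf hg

@[fun_prop]
theorem primrecPred_imp {p q : α → Prop} (hp : PrimrecPred p) (hq : PrimrecPred q) :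
    PrimrecPred fun x => p x → q x :=
  (hp.not.or hq).of_eq fun _ => imp_iff_not_or.symm

@[fun_prop]
theorem primrecPred_forall_mem {f : α → List β} {p : α → β → Prop} (hf : Primrec f)
    (hp : PrimrecPred fun z : α × β => p z.1 z.2) : PrimrecPred fun x => ∀ i ∈ f x, p x i :=
  (PrimrecRel.forall_mem_list (R := fun i x => p x i) (PrimrecRel.swap hp)).comp hf Primrec.id

@[fun_prop]
theorem primrecPred_exists_mem {f : α → List β} {p : α → β → Prop} (hf : Primrec f)
    (hp : PrimrecPred fun z : α × β => p z.1 z.2) : PrimrecPred fun x => ∃ i ∈ f x, p x i :=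
  (PrimrecRel.exists_mem_list (R := fun i x => p x i) (PrimrecRel.swap hp)).comp hf Primrec.id

@[fun_prop]
theorem primrecPred_forall_lt {f : α → ℕ} {p : α → ℕ → Prop} (hf : Primrec f)
    (hp : PrimrecPred fun z : α × ℕ => p z.1 z.2) : PrimrecPred fun x => ∀ i < f x, p x i :=
  (primrecPred_forall_mem (f := fun x => List.range (f x)) (by fun_prop) hp).of_eq fun x => by
    simp only [List.mem_range]

@[fun_prop]
theorem primrecPred_exists_lt {f : α → ℕ} {p : α → ℕ → Prop} (hf : Primrec f)
    (hp : PrimrecPred fun z : α × ℕ => p z.1 z.2) : PrimrecPred fun x => ∃ i < f x, p x i :=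
  (primrecPred_exists_mem (f := fun x => List.range (f x)) (by fun_prop) hp).of_eq fun x => by
    simp only [List.mem_range]

@[fun_prop]
theorem primrecPred_exists_mem_option {o : α → Option β} {p : α → β → Prop} (ho : Primrec o)
    (hp : PrimrecPred fun z : α × β => p z.1 z.2) : PrimrecPred fun x => ∃ y ∈ o x, p x y := by
  have h : Primrec fun x => ((o x).map fun y => decide (p x y)).getD false :=
    Primrec.option_getD.comp (Primrec.option_map ho hp.decide.to₂) (Primrec.const _)
  refine (Primrec.eq.comp h (Primrec.const true)).of_eq fun x => ?_
  cases o x <;> simp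

@[fun_prop]
theorem primrecPred_forall_mem_option {o : α → Option β} {p : α → β → Prop} (ho : Primrec o)
    (hp : PrimrecPred fun z : α × β => p z.1 z.2) : PrimrecPred fun x => ∀ y ∈ o x, p x y :=
  (primrecPred_exists_mem_option (p := fun x y => ¬ p x y) ho hp.not).not.of_eq fun x => by simp

@[fun_prop]
theorem primrecPred_isPrefix {f g : α → List β} (hf : Primrec f) (hg : Primrec g) :
    PrimrecPred fun x => f x <+: g x :=
  (primrecPred_eq hf (primrec_take hg (by fun_prop))).of_eq fun x =>
    List.prefix_iff_eq_take.symm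

end PrimitiveRecursion

/-! ### The classes `Σ₁` and `Σ₂` -/

section ArithmeticalClasses

variable {α β : Type*} [Primcodable α] [Primcodable β]

/-- A `Σ₁` predicate: an existential quantifier in front of a primitive recursive matrix. -/
@[fun_prop]
def IsSigma1 (P : α → Prop) : Prop :=
  ∃ R : α × ℕ → Prop, PrimrecPred R ∧ ∀ x, P x ↔ ∃ j, R (x, j)

/-- A `Σ₂` predicate: the quantifiers `∃ ∀` in front of a primitive recursive matrix. -/
@[fun_prop]
def IsSigma2 (P : α → Prop) : Prop :=
  ∃ R : (α × ℕ) × ℕ → Prop, PrimrecPred R ∧ ∀ x, P x ↔ ∃ k, ∀ j, R ((x, k), j)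

@[fun_prop]
theorem IsSigma1.comp {P : β → Prop} {f : α → β} (hP : IsSigma1 P) (hf : Primrec f) :
    IsSigma1 fun x => P (f x) := by
  obtain ⟨R, hR, hPR⟩ := hP
  exact ⟨fun z => R (f z.1, z.2), by fun_prop, fun x => hPR (f x)⟩

@[fun_prop]
theorem IsSigma1.of_primrecPred {P : α → Prop} (hP : PrimrecPred P) : IsSigma1 P :=
  ⟨fun z => P z.1, by fun_prop, by simp⟩

@[fun_prop]
theorem IsSigma1.exists_primrecPred {P : α → ℕ → Prop}
    (hP : PrimrecPred fun z : α × ℕ => P z.1 z.2) : IsSigma1 fun x => ∃ j, P x j :=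
  ⟨fun z => P z.1 z.2, hP, fun _ => Iff.rfl⟩

namespace IsSigma2

theorem of_iff {P Q : α → Prop} (hP : IsSigma2 P) (h : ∀ x, Q x ↔ P x) : IsSigma2 Q :=
  funext (fun x => propext (h x)) ▸ hP

@[fun_prop]
theorem of_primrecPred {P : α → Prop} (hP : PrimrecPred P) : IsSigma2 P :=
  ⟨fun z => P z.1.1, by fun_prop, by simp⟩

@[fun_prop]
theorem forall_primrecPred {P : α → ℕ → Prop} (hP : PrimrecPred fun z : α × ℕ => P z.1 z.2) :
    IsSigma2 fun x => ∀ j, P x j :=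
  ⟨fun z => P z.1.1 z.2,
    PrimrecPred.comp (f := fun z : (α × ℕ) × ℕ => (z.1.1, z.2)) hP (by fun_prop), by simp⟩

@[fun_prop]
theorem comp {P : β → Prop} {f : α → β} (hP : IsSigma2 P) (hf : Primrec f) :
    IsSigma2 fun x => P (f x) := by
  obtain ⟨R, hR, hPR⟩ := hP
  exact ⟨fun z => R ((f z.1.1, z.1.2), z.2), by fun_prop, fun x => hPR (f x)⟩

@[fun_prop]
theorem and {P Q : α → Prop} (hP : IsSigma2 P) (hQ : IsSigma2 Q) :
    IsSigma2 fun x => P x ∧ Q x := by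
  obtain ⟨R, hR, hPR⟩ := hP
  obtain ⟨S, hS, hQS⟩ := hQ
  refine ⟨fun z => R ((z.1.1, z.1.2.unpair.1), z.2) ∧ S ((z.1.1, z.1.2.unpair.2), z.2),
    by fun_prop, fun x => ?_⟩
  simp only [hPR, hQS]
  constructor
  · rintro ⟨⟨k, hk⟩, l, hl⟩
    exact ⟨Nat.pair k l, fun j => by simpa using ⟨hk j, hl j⟩⟩
  · rintro ⟨k, hk⟩
    exact ⟨⟨_, fun j => (hk j).1⟩, _, fun j => (hk j).2⟩

@[fun_prop]
theorem or {P Q : α → Prop} (hP : IsSigma2 P) (hQ : IsSigma2 Q) :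
    IsSigma2 fun x => P x ∨ Q x := by
  obtain ⟨R, hR, hPR⟩ := hP
  obtain ⟨S, hS, hQS⟩ := hQ
  refine ⟨fun z => (z.1.2.unpair.1 = 0 ∧ R ((z.1.1, z.1.2.unpair.2), z.2)) ∨
    (z.1.2.unpair.1 = 1 ∧ S ((z.1.1, z.1.2.unpair.2), z.2)), by fun_prop, fun x => ?_⟩
  simp only [hPR, hQS]
  constructor
  · rintro (⟨k, hk⟩ | ⟨k, hk⟩)
    · exact ⟨Nat.pair 0 k, fun j => by simpa using hk j⟩
    · exact ⟨Nat.pair 1 k, fun j => by simpa using hk j⟩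
  · rintro ⟨k, hk⟩
    rcases hk 0 with ⟨h0, -⟩ | ⟨h0, -⟩
    · exact Or.inl ⟨_, fun j => by simpa [h0] using hk j⟩
    · exact Or.inr ⟨_, fun j => by simpa [h0] using hk j⟩

@[fun_prop]
theorem exists_snd {P : α → β → Prop} (hP : IsSigma2 fun z : α × β => P z.1 z.2) :
    IsSigma2 fun x => ∃ y, P x y := by
  obtain ⟨R, hR, hPR⟩ := hP
  refine ⟨fun z => ∃ y ∈ (Encodable.decode z.1.2.unpair.1 : Option β),
    R (((z.1.1, y), z.1.2.unpair.2), z.2), by fun_prop, fun x => ?_⟩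
  constructor
  · rintro ⟨y, hy⟩
    obtain ⟨k, hk⟩ := (hPR (x, y)).1 hy
    exact ⟨Nat.pair (Encodable.encode y) k, fun j => ⟨y, by simp, by simpa using hk j⟩⟩
  · rintro ⟨k, hk⟩
    obtain ⟨y, hy, -⟩ := hk 0
    refine ⟨y, (hPR (x, y)).2 ⟨k.unpair.2, fun j => ?_⟩⟩
    obtain ⟨y', hy', h⟩ := hk j
    rwa [Option.mem_unique hy hy']

@[fun_prop]
theorem forall_lt {P : α → ℕ → Prop} {f : α → ℕ} (hf : Primrec f)
    (hP : IsSigma2 fun z : α × ℕ => P z.1 z.2) : IsSigma2 fun x => ∀ i < f x, P x i := by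
  obtain ⟨R, hR, hPR⟩ := hP
  -- The witnesses for the finitely many `i < f x` are collected in a list.
  have hlist : IsSigma2 fun x => ∃ l : List ℕ, ∀ j, ∀ i < f x, R (((x, i), l.getD i 0), j) := by
    fun_prop
  refine hlist.of_iff fun x => ⟨fun hx => ?_, ?_⟩
  · choose! k hk using fun i hi => (hPR (x, i)).1 (hx i hi)
    refine ⟨(List.range (f x)).map k, fun j i hi => ?_⟩
    simpa [List.getD, List.getElem?_range hi] using hk i hi j
  · rintro ⟨l, hl⟩ i hi
    exact (hPR (x, i)).2 ⟨_, fun j => hl j i hi⟩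

end IsSigma2

@[fun_prop]
theorem IsSigma1.isSigma2 {P : α → Prop} (hP : IsSigma1 P) : IsSigma2 P := by
  obtain ⟨R, hR, hPR⟩ := hP
  have h : IsSigma2 fun x => ∃ j, R (x, j) := by fun_prop
  exact h.of_iff hPR

@[fun_prop]
theorem IsSigma1.not_isSigma2 {P : α → Prop} (hP : IsSigma1 P) : IsSigma2 fun x => ¬ P x := by
  obtain ⟨R, hR, hPR⟩ := hP
  have h : IsSigma2 fun x => ∀ j, ¬ R (x, j) := by fun_prop
  exact h.of_iff fun x => by rw [hPR, not_exists]

end ArithmeticalClasses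

/-! ### Post's theorem: computable enumerability in `∅'` is `Σ₂` -/

section PostTheorem

open Nat.Partrec (Code)

@[fun_prop]
theorem primrec_evaln {α : Type*} [Primcodable α] {s n : α → ℕ} {c : α → Code} (hs : Primrec s)
    (hc : Primrec c) (hn : Primrec n) : Primrec fun x => (c x).evaln (s x) (n x) :=
  Code.primrec_evaln.comp ((hs.pair hc).pair hn)

theorem isSigma1_eval_dom : IsSigma1 fun z : Code × ℕ => (z.1.eval z.2).Dom := by
  refine ⟨fun z => (z.1.1.evaln z.2 z.1.2).isSome = true, by fun_prop, fun z => ?_⟩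
  simp only [Part.dom_iff_mem, Code.evaln_complete, Option.isSome_iff_exists]
  exact exists_comm

/-- One step of decoding: from the list of the programs with numbers `0, …, n - 1`, the program
with number `n`. Oracle codes are numbered like `Nat.Partrec.Code`, with `oracle` inserted at `4`;
its query is replaced by the constant `0`. -/
def decodeStep (l : List Code) : Code :=
  if l.length = 1 then .succ
  else if l.length = 2 then .left
  else if l.length = 3 then .right
  else if l.length < 5 then .zero
  else if l.length % 4 = 1 then
    .pair (l.getD ((l.length - 5) / 4).unpair.1 .zero) (l.getD ((l.length - 5) / 4).unpair.2 .zero)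
  else if l.length % 4 = 2 then
    .prec (l.getD ((l.length - 5) / 4).unpair.1 .zero) (l.getD ((l.length - 5) / 4).unpair.2 .zero)
  else if l.length % 4 = 3 then
    .comp (l.getD ((l.length - 5) / 4).unpair.1 .zero) (l.getD ((l.length - 5) / 4).unpair.2 .zero)
  else .rfind' (l.getD ((l.length - 5) / 4) .zero)

/-- The programs translating the oracle codes with numbers below `n`. -/
def programsBelow : ℕ → List Code
  | 0 => []
  | n + 1 => programsBelow n ++ [decodeStep (programsBelow n)]

/-- The program computing, without an oracle, what the oracle code with number `n` computes from
the oracle `∅`. -/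
def program (n : ℕ) : Code := decodeStep (programsBelow n)

theorem primrec_decodeStep : Primrec decodeStep := by
  have hpair {f g : List Code → Code} (hf : Primrec f) (hg : Primrec g) :=
    Code.primrec₂_pair.comp hf hg
  have hprec {f g : List Code → Code} (hf : Primrec f) (hg : Primrec g) :=
    Code.primrec₂_prec.comp hf hg
  have hcomp {f g : List Code → Code} (hf : Primrec f) (hg : Primrec g) :=
    Code.primrec₂_comp.comp hf hg
  have hrfind {f : List Code → Code} (hf : Primrec f) := Code.primrec_rfind'.comp hf
  unfold decodeStep
  iterate 4 refine primrec_ite (by fun_prop) (by fun_prop) ?_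
  refine primrec_ite (by fun_prop) (hpair (by fun_prop) (by fun_prop)) ?_
  refine primrec_ite (by fun_prop) (hprec (by fun_prop) (by fun_prop)) ?_
  exact primrec_ite (by fun_prop) (hcomp (by fun_prop) (by fun_prop)) (hrfind (by fun_prop))

@[fun_prop]
theorem primrec_program : Primrec program := by
  have hstep := primrec_decodeStep
  have h : Primrec programsBelow :=
    (Primrec.nat_rec₁ (f := fun _ l => l ++ [decodeStep l]) [] (by
      unfold Primrec₂; fun_prop)).of_eq fun n => by
        induction n with
        | zero => rfl
        | succ n ih => simp only [programsBelow, ← ih]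
  exact hstep.comp h

theorem length_programsBelow (n : ℕ) : (programsBelow n).length = n := by
  induction n with
  | zero => rfl
  | succ n ih => simp [programsBelow, ih]

theorem getD_programsBelow {m n : ℕ} (h : m < n) :
    (programsBelow n).getD m .zero = program m := by
  induction n with
  | zero => omega
  | succ n ih =>
    rcases Nat.lt_succ_iff_lt_or_eq.1 h with h | rfl
    · rw [programsBelow, List.getD_append _ _ _ _ (by rwa [length_programsBelow]), ih h]
    · rw [programsBelow, List.getD_append_right _ _ _ _ (by rw [length_programsBelow])]
      simp [length_programsBelow, program]

theorem program_four_mul_add {p k : ℕ} (hk : k < 4) : program (4 * p + (5 + k)) =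
    if k = 0 then .pair (program p.unpair.1) (program p.unpair.2)
    else if k = 1 then .prec (program p.unpair.1) (program p.unpair.2)
    else if k = 2 then .comp (program p.unpair.1) (program p.unpair.2)
    else .rfind' (program p) := by
  have hp : (4 * p + (5 + k) - 5) / 4 = p := by omega
  have hl : p.unpair.1 < 4 * p + (5 + k) := by have := p.unpair_left_le; omega
  have hr : p.unpair.2 < 4 * p + (5 + k) := by have := p.unpair_right_le; omega
  rw [program, decodeStep, length_programsBelow, hp, getD_programsBelow hl, getD_programsBelow hr,
    getD_programsBelow (by omega)]
  interval_cases k <;> simp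

theorem eval_program_encode (c : CodeO) : (program c.encode).eval = c.eval fun _ => 0 := by
  induction c with
  | zero | succ | left | right | oracle => rfl
  | pair a b iha ihb =>
    rw [show (CodeO.pair a b).encode = 4 * Nat.pair a.encode b.encode + (5 + 0) by
      rw [CodeO.encode]; omega, program_four_mul_add (by omega)]
    simp only [↓reduceIte, Nat.unpair_pair, Code.eval, CodeO.eval, iha, ihb]
    rfl
  | comp a b iha ihb =>
    rw [show (CodeO.comp a b).encode = 4 * Nat.pair a.encode b.encode + (5 + 2) by
      rw [CodeO.encode]; omega, program_four_mul_add (by omega)]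
    simp [Code.eval, CodeO.eval, iha, ihb]
    rfl
  | prec a b iha ihb =>
    rw [show (CodeO.prec a b).encode = 4 * Nat.pair a.encode b.encode + (5 + 1) by
      rw [CodeO.encode]; omega, program_four_mul_add (by omega)]
    simp [Code.eval, CodeO.eval, iha, ihb]
    rfl
  | rfind' a iha =>
    rw [show (CodeO.rfind' a).encode = 4 * a.encode + (5 + 3) by
      rw [CodeO.encode]; omega, program_four_mul_add (by omega)]
    simp [Code.eval, CodeO.eval, iha]
    rfl

theorem CodeO.encode_surjective : Function.Surjective CodeO.encode := by
  intro n
  induction n using Nat.strong_induction_on with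
  | _ n ih =>
    rcases lt_or_ge n 5 with hn | hn
    · interval_cases n
      exacts [⟨.zero, rfl⟩, ⟨.succ, rfl⟩, ⟨.left, rfl⟩, ⟨.right, rfl⟩, ⟨.oracle, rfl⟩]
    · have hlt : (n - 5) / 4 < n := by omega
      obtain ⟨a, ha⟩ := ih ((n - 5) / 4).unpair.1 ((Nat.unpair_left_le _).trans_lt hlt)
      obtain ⟨b, hb⟩ := ih ((n - 5) / 4).unpair.2 ((Nat.unpair_right_le _).trans_lt hlt)
      obtain ⟨d, hd⟩ := ih ((n - 5) / 4) hlt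
      rcases (by omega : n % 4 = 1 ∨ n % 4 = 2 ∨ n % 4 = 3 ∨ n % 4 = 0) with h | h | h | h
      · exact ⟨.pair a b, by rw [CodeO.encode, ha, hb, Nat.pair_unpair]; omega⟩
      · exact ⟨.prec a b, by rw [CodeO.encode, ha, hb, Nat.pair_unpair]; omega⟩
      · exact ⟨.comp a b, by rw [CodeO.encode, ha, hb, Nat.pair_unpair]; omega⟩
      · exact ⟨.rfind' d, by rw [CodeO.encode, hd]; omega⟩

theorem iterJump_one (n : ℕ) : iterJump 1 n = if ((program n).eval n).Dom then 1 else 0 := by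
  refine if_congr ⟨?_, fun h => ?_⟩ rfl rfl
  · rintro ⟨c, rfl, h⟩
    rwa [eval_program_encode]
  · obtain ⟨c, rfl⟩ := CodeO.encode_surjective n
    exact ⟨c, rfl, by rwa [eval_program_encode] at h⟩

/-- The graph of the partial function computed by `c` from the oracle `O`. -/
@[fun_prop]
def CodeO.Graph (O : ℕ → ℕ) (c : CodeO) (z : ℕ × ℕ) : Prop := z.2 ∈ c.eval O z.1

theorem isSigma2_iterJump_one : IsSigma2 fun z : ℕ × ℕ => z.2 = iterJump 1 z.1 := by
  have hdom : IsSigma1 fun z : ℕ × ℕ => ((program z.1).eval z.1).Dom :=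
    isSigma1_eval_dom.comp (f := fun z : ℕ × ℕ => (program z.1, z.1)) (by fun_prop)
  refine ((hdom.isSigma2.and (Q := fun z => z.2 = 1) (by fun_prop)).or
    (hdom.not_isSigma2.and (Q := fun z => z.2 = 0) (by fun_prop))).of_iff fun z => ?_
  rw [iterJump_one]
  split_ifs with hz <;> simp [hz]

theorem mem_natRec_iff {f : Part ℕ} {g : ℕ → ℕ →. ℕ} {m v : ℕ} :
    v ∈ (Nat.rec f (fun y ih => ih.bind (g y)) m : Part ℕ) ↔
      ∃ l : List ℕ, l.length = m + 1 ∧ l.getD 0 0 ∈ f ∧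
        (∀ y < m, l.getD (y + 1) 0 ∈ g y (l.getD y 0)) ∧ v = l.getD m 0 := by
  constructor
  · intro hv
    induction m generalizing v with
    | zero => exact ⟨[v], by simp, by simpa using hv, by simp⟩
    | succ m ih =>
      obtain ⟨i, hi, hv⟩ := Part.mem_bind_iff.1 hv
      obtain ⟨l, hl, h0, hstep, rfl⟩ := ih hi
      refine ⟨l ++ [v], by simp [hl], ?_, fun y hy => ?_, ?_⟩
      · rwa [List.getD_append _ _ _ _ (by omega)]
      · rw [List.getD_append _ _ _ _ (by omega : y < l.length)]
        rcases Nat.lt_succ_iff_lt_or_eq.1 hy with hy | rfl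
        · rw [List.getD_append _ _ _ _ (by omega)]
          exact hstep y hy
        · rw [List.getD_append_right _ _ _ _ (by omega), hl]
          simpa using hv
      · rw [List.getD_append_right _ _ _ _ (by omega), hl]
        simp
  · rintro ⟨l, -, h0, hstep, rfl⟩
    induction m with
    | zero => exact h0
    | succ m ih =>
      exact Part.mem_bind_iff.2 ⟨_, ih fun y hy => hstep y (by omega), hstep m (by omega)⟩

theorem mem_map_add_rfind_iff {g : ℕ →. ℕ} {m v : ℕ} :
    v ∈ (Nat.rfind fun n => (fun y => decide (y = 0)) <$> g n).map (· + m) ↔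
      ∃ k, v = k + m ∧ 0 ∈ g k ∧ ∀ i < k, ∃ w, 0 < w ∧ w ∈ g i := by
  refine (Part.mem_map_iff _).trans (exists_congr fun k =>
    (and_congr_left' Nat.mem_rfind).trans ?_)
  simp [and_comm, eq_comm, Nat.pos_iff_ne_zero]

theorem isSigma2_graph {O : ℕ → ℕ} (hO : IsSigma2 fun z : ℕ × ℕ => z.2 = O z.1) (c : CodeO) :
    IsSigma2 (c.Graph O) := by
  induction c with
  | zero =>
    have h : IsSigma2 fun z : ℕ × ℕ => z.2 = 0 := by fun_prop
    exact h.of_iff fun z => Part.mem_some_iff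
  | succ =>
    have h : IsSigma2 fun z : ℕ × ℕ => z.2 = z.1 + 1 := by fun_prop
    exact h.of_iff fun z => Part.mem_some_iff
  | left =>
    have h : IsSigma2 fun z : ℕ × ℕ => z.2 = z.1.unpair.1 := by fun_prop
    exact h.of_iff fun z => Part.mem_some_iff
  | right =>
    have h : IsSigma2 fun z : ℕ × ℕ => z.2 = z.1.unpair.2 := by fun_prop
    exact h.of_iff fun z => Part.mem_some_iff
  | oracle => exact hO.of_iff fun z => Part.mem_some_iff
  | pair a b iha ihb =>
    have h : IsSigma2 fun z : ℕ × ℕ => ∃ w : ℕ × ℕ, a.Graph O (z.1, w.1) ∧ b.Graph O (z.1, w.2) ∧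
        z.2 = Nat.pair w.1 w.2 := by fun_prop
    exact h.of_iff fun z => by simp [CodeO.Graph, CodeO.eval, Seq.seq, eq_comm]
  | comp a b iha ihb =>
    have h : IsSigma2 fun z : ℕ × ℕ => ∃ w : ℕ, b.Graph O (z.1, w) ∧ a.Graph O (w, z.2) := by
      fun_prop
    exact h.of_iff fun z => Part.mem_bind_iff
  | prec a b iha ihb =>
    have h : IsSigma2 fun z : ℕ × ℕ => ∃ l : List ℕ, l.length = z.1.unpair.2 + 1 ∧
        a.Graph O (z.1.unpair.1, l.getD 0 0) ∧
        (∀ y < z.1.unpair.2, b.Graph O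
          (Nat.pair z.1.unpair.1 (Nat.pair y (l.getD y 0)), l.getD (y + 1) 0)) ∧
        z.2 = l.getD z.1.unpair.2 0 := by fun_prop
    exact h.of_iff fun z => mem_natRec_iff
  | rfind' a iha =>
    have h : IsSigma2 fun z : ℕ × ℕ => ∃ k : ℕ, z.2 = k + z.1.unpair.2 ∧
        a.Graph O (Nat.pair z.1.unpair.1 (k + z.1.unpair.2), 0) ∧
        ∀ i < k, ∃ w, 0 < w ∧
          a.Graph O (Nat.pair z.1.unpair.1 (i + z.1.unpair.2), w) := by fun_prop
    exact h.of_iff fun z => mem_map_add_rfind_iff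

theorem isSigma2_of_ceIn {S : Set ℕ} (hS : CeIn (iterJump 1) S) : IsSigma2 fun m => m ∈ S := by
  obtain ⟨c, rfl⟩ := hS
  have hgraph := isSigma2_graph isSigma2_iterJump_one c
  have h : IsSigma2 fun m => ∃ v, c.Graph (iterJump 1) (m, v) := by fun_prop
  exact h.of_iff fun m => Part.dom_iff_mem

/-- An ordinary program, regarded as an oracle code which makes no query. -/
def CodeO.ofCode : Code → CodeO
  | .zero => .zero
  | .succ => .succ
  | .left => .left
  | .right => .right
  | .pair a b => .pair (ofCode a) (ofCode b)
  | .comp a b => .comp (ofCode a) (ofCode b)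
  | .prec a b => .prec (ofCode a) (ofCode b)
  | .rfind' a => .rfind' (ofCode a)

theorem CodeO.eval_ofCode (O : ℕ → ℕ) (c : Code) : (ofCode c).eval O = c.eval := by
  induction c with
  | zero | succ | left | right => rfl
  | pair a b iha ihb | comp a b iha ihb | prec a b iha ihb =>
    simp only [ofCode, Code.eval, CodeO.eval, iha, ihb]
    rfl
  | rfind' a iha =>
    simp only [ofCode, Code.eval, CodeO.eval, iha]
    rfl

theorem CodeO.eval_comp_of_eq_some {O : ℕ → ℕ} (a : CodeO) {b : CodeO} {n x : ℕ}
    (h : b.eval O n = Part.some x) : (CodeO.comp a b).eval O n = a.eval O x :=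
  (congrArg (Part.bind · (a.eval O)) h).trans (Part.bind_some _ _)

/-- An oracle code for the constant function `n`. -/
def CodeO.const : ℕ → CodeO
  | 0 => .zero
  | n + 1 => .comp .succ (const n)

theorem CodeO.eval_const (O : ℕ → ℕ) (n m : ℕ) : (CodeO.const n).eval O m = Part.some n := by
  induction n with
  | zero => rfl
  | succ n ih => exact CodeO.eval_comp_of_eq_some _ ih

@[fun_prop]
theorem CodeO.primrec_encode_const : Primrec fun n => (CodeO.const n).encode := by
  refine (Primrec.nat_rec₁ (f := fun _ r => 2 * (2 * Nat.pair 1 r + 1) + 5) 0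
    (by unfold Primrec₂; fun_prop)).of_eq fun n => ?_
  induction n with
  | zero => rfl
  | succ n ih => simp only [CodeO.const, CodeO.encode, ← ih]

theorem CodeO.exists_eval_eq_of_primrec (O : ℕ → ℕ) {f : ℕ → ℕ} (hf : Primrec f) :
    ∃ c : CodeO, ∀ n, c.eval O n = Part.some (f n) := by
  obtain ⟨c, hc⟩ := Code.exists_code.1 (Nat.Partrec.of_primrec (Primrec.nat_iff.1 hf))
  exact ⟨ofCode c, fun n => by rw [eval_ofCode, hc]; rfl⟩

theorem exists_code_dom_iff_of_isSigma1 {P : ℕ → Prop} (hP : IsSigma1 P) :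
    ∃ c : Code, ∀ n, (c.eval n).Dom ↔ P n := by
  obtain ⟨R, hR, hPR⟩ := hP
  have hsearch : Nat.Partrec fun n => Nat.rfind fun j => Part.some (decide (R (n, j))) :=
    Partrec.nat_iff.1 <| Partrec.rfind (p := fun n j => Part.some (decide (R (n, j))))
      hR.decide.to_comp.partrec
  obtain ⟨c, hc⟩ := Code.exists_code.1 hsearch
  refine ⟨c, fun n => ?_⟩
  rw [hc, hPR]
  exact Nat.rfind_dom.trans (by simp)

theorem exists_primrec_iterJump_one_eq_zero_iff {P : ℕ → Prop} (hP : IsSigma1 P) :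
    ∃ f : ℕ → ℕ, Primrec f ∧ ∀ n, iterJump 1 (f n) = 0 ↔ ¬ P n := by
  obtain ⟨c, hc⟩ := exists_code_dom_iff_of_isSigma1 hP
  refine ⟨fun n => (CodeO.comp (.ofCode c) (.const n)).encode, ?_, fun n => ?_⟩
  · simp only [CodeO.encode]
    fun_prop
  · rw [iterJump_one, eval_program_encode,
      CodeO.eval_comp_of_eq_some _ (CodeO.eval_const _ _ _), CodeO.eval_ofCode, hc]
    split_ifs with hn <;> simp [hn]

/-- Searching for `k` with `∅'(f ⟨m, k⟩) = 0` enumerates `{m | ∃ k, ¬ P ⟨m, k⟩}`. -/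
theorem ceIn_of_isSigma2 {S : Set ℕ} (hS : IsSigma2 fun m => m ∈ S) : CeIn (iterJump 1) S := by
  obtain ⟨R, hR, hSR⟩ := hS
  have hP : IsSigma1 fun x : ℕ => ∃ j, ¬ R (x.unpair, j) := by fun_prop
  obtain ⟨f, hf, hjump⟩ := exists_primrec_iterJump_one_eq_zero_iff hP
  obtain ⟨c, hc⟩ := CodeO.exists_eval_eq_of_primrec (iterJump 1) hf
  have hquery (n : ℕ) : (CodeO.comp .oracle c).eval (iterJump 1) n = Part.some (iterJump 1 (f n)) :=
    CodeO.eval_comp_of_eq_some _ (hc n)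
  have hinput (m : ℕ) : (CodeO.pair (.pair .left .right) .zero).eval (iterJump 1) m =
      Part.some (Nat.pair m 0) := by
    simp [CodeO.eval, Seq.seq, pure, PFun.pure]
  refine ⟨.comp (.rfind' (.comp .oracle c)) (.pair (.pair .left .right) .zero), Set.ext fun m => ?_⟩
  rw [Set.mem_ofPred_eq, CodeO.eval_comp_of_eq_some _ (hinput m), CodeO.eval]
  simp only [Nat.unpaired, Nat.unpair_pair, hquery, add_zero]
  refine Iff.trans ?_ Nat.rfind_dom.symm
  simp [hSR, hjump]

end PostTheorem

/-! ### Codes of rational numbers and right cuts -/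

section RightCuts

theorem encode_int (n : ℤ) :
    (Encodable.encode n + 1) / 2 = n.natAbs ∧ (Encodable.encode n % 2 = 1 ↔ n < 0) := by
  rcases n with n | n
  · have h : Encodable.encode (Int.ofNat n) = 2 * n := rfl
    rw [h, Int.ofNat_eq_natCast, Int.natAbs_natCast]
    omega
  · have h : Encodable.encode (Int.negSucc n) = 2 * n + 1 := rfl
    rw [h, Int.natAbs_negSucc, Int.negSucc_eq]
    omega

theorem encode_int_surjective : Function.Surjective (Encodable.encode : ℤ → ℕ) := by
  intro m
  rcases m.even_or_odd' with ⟨k, rfl | rfl⟩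
  · exact ⟨Int.ofNat k, rfl⟩
  · exact ⟨Int.negSucc k, rfl⟩

theorem encode_rat (q : ℚ) : Encodable.encode q = Nat.pair (Encodable.encode q.num) q.den := rfl

/-- `m` is the code of a rational number: its second component is positive, and has no common
divisor other than `1` with the absolute value coded by the first component. -/
def IsRatCode (m : ℕ) : Prop :=
  0 < m.unpair.2 ∧
    ∀ k < m.unpair.2 + 1, ((m.unpair.1 + 1) / 2) % k = 0 → m.unpair.2 % k = 0 → k = 1

@[fun_prop]
theorem primrecPred_isRatCode {α : Type*} [Primcodable α] {m : α → ℕ} (hm : Primrec m) :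
    PrimrecPred fun x => IsRatCode (m x) := by
  unfold IsRatCode
  fun_prop

theorem isRatCode_iff (m : ℕ) : IsRatCode m ↔ ∃ q : ℚ, Encodable.encode q = m := by
  constructor
  · rintro ⟨hpos, hcop⟩
    obtain ⟨n, hn⟩ := encode_int_surjective m.unpair.1
    rw [← hn, (encode_int n).1] at hcop
    have hred : n.natAbs.Coprime m.unpair.2 :=
      hcop _ (Nat.lt_succ_of_le (Nat.gcd_le_right _ hpos))
        (Nat.mod_eq_zero_of_dvd (Nat.gcd_dvd_left _ _))
        (Nat.mod_eq_zero_of_dvd (Nat.gcd_dvd_right _ _))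
    exact ⟨⟨n, m.unpair.2, hpos.ne', hred⟩, by rw [encode_rat, hn, Nat.pair_unpair]⟩
  · rintro ⟨q, rfl⟩
    simp only [IsRatCode, encode_rat, Nat.unpair_pair, (encode_int q.num).1]
    exact ⟨q.den_pos, fun k _ hnum hden =>
      Nat.eq_one_of_dvd_coprimes q.reduced (Nat.dvd_of_mod_eq_zero hnum)
        (Nat.dvd_of_mod_eq_zero hden)⟩

/-- The rational number with code `m` is smaller than `k / 2 ^ s`. -/
def RatCodeLT (m k s : ℕ) : Prop :=
  m.unpair.1 % 2 = 1 ∨ (m.unpair.1 + 1) / 2 * 2 ^ s < k * m.unpair.2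

/-- The rational number with code `m` is greater than `k / 2 ^ s`. -/
def RatCodeGT (m k s : ℕ) : Prop :=
  m.unpair.1 % 2 = 0 ∧ k * m.unpair.2 < (m.unpair.1 + 1) / 2 * 2 ^ s

@[fun_prop]
theorem primrecPred_ratCodeLT {α : Type*} [Primcodable α] {m k s : α → ℕ} (hm : Primrec m)
    (hk : Primrec k) (hs : Primrec s) : PrimrecPred fun x => RatCodeLT (m x) (k x) (s x) := by
  unfold RatCodeLT
  fun_prop

@[fun_prop]
theorem primrecPred_ratCodeGT {α : Type*} [Primcodable α] {m k s : α → ℕ} (hm : Primrec m)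
    (hk : Primrec k) (hs : Primrec s) : PrimrecPred fun x => RatCodeGT (m x) (k x) (s x) := by
  unfold RatCodeGT
  fun_prop

theorem cast_rat_eq_div (q : ℚ) : (q : ℝ) = q.num / q.den := by
  exact_mod_cast (Rat.num_div_den q).symm

theorem ratCodeLT_encode (q : ℚ) (k s : ℕ) :
    RatCodeLT (Encodable.encode q) k s ↔ (q : ℝ) < k / 2 ^ s := by
  have hden : (0 : ℝ) < q.den := by exact_mod_cast q.den_pos
  simp only [RatCodeLT, encode_rat, Nat.unpair_pair, (encode_int q.num).1, (encode_int q.num).2]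
  rw [cast_rat_eq_div, div_lt_div_iff₀ hden (by positivity)]
  rcases lt_or_ge q.num 0 with hq | hq
  · have hnum : (q.num : ℝ) * 2 ^ s < 0 :=
      mul_neg_of_neg_of_pos (by exact_mod_cast hq) (by positivity)
    simpa only [hq, true_or, true_iff] using hnum.trans_le (by positivity)
  · rw [← Int.natAbs_of_nonneg hq]
    simp only [Int.natAbs_natCast, Int.natCast_nonneg, not_lt.2, false_or, Int.cast_natCast]
    norm_cast

theorem ratCodeGT_encode (q : ℚ) (k s : ℕ) :
    RatCodeGT (Encodable.encode q) k s ↔ (k : ℝ) / 2 ^ s < q := by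
  have hden : (0 : ℝ) < q.den := by exact_mod_cast q.den_pos
  have hparity : Encodable.encode q.num % 2 = 0 ↔ 0 ≤ q.num := by
    have := (encode_int q.num).2
    omega
  simp only [RatCodeGT, encode_rat, Nat.unpair_pair, (encode_int q.num).1, hparity]
  rw [cast_rat_eq_div, div_lt_div_iff₀ (by positivity) hden]
  rcases lt_or_ge q.num 0 with hq | hq
  · have hnum : (q.num : ℝ) * 2 ^ s < 0 :=
      mul_neg_of_neg_of_pos (by exact_mod_cast hq) (by positivity)
    simpa only [not_le.2 hq, false_and, false_iff, not_lt] using hnum.le.trans (by positivity)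
  · rw [← Int.natAbs_of_nonneg hq]
    simp only [Int.natAbs_natCast, Int.natCast_nonneg, true_and, Int.cast_natCast]
    norm_cast

/-- The dyadic right cut of `γ` is `Σ₂`. For `0 ≤ γ` this is the same as being `∅'`-right-c.e.,
but avoids the coding of rational numbers. -/
def HasSigma2RightCut (γ : ℝ) : Prop := IsSigma2 fun z : ℕ × ℕ => γ < (z.1 : ℝ) / 2 ^ z.2

theorem exists_dyadic_btwn {x y : ℝ} (hx : 0 ≤ x) (hxy : x < y) :
    ∃ a s : ℕ, x < (a : ℝ) / 2 ^ s ∧ (a : ℝ) / 2 ^ s < y := by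
  obtain ⟨s, hs⟩ := exists_pow_lt_of_lt_one (sub_pos.2 hxy) (by norm_num : (1 / 2 : ℝ) < 1)
  rw [one_div_pow, div_lt_iff₀ (by positivity)] at hs
  refine ⟨⌊x * 2 ^ s⌋₊ + 1, s, ?_, ?_⟩
  · rw [lt_div_iff₀ (by positivity)]
    exact_mod_cast Nat.lt_floor_add_one _
  · rw [div_lt_iff₀ (by positivity), Nat.cast_add_one]
    linarith [Nat.floor_le (a := x * 2 ^ s) (by positivity)]

theorem hasSigma2RightCut_of_rightCeIn {α : ℝ} (hα : RightCeIn (iterJump 1) α) :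
    HasSigma2RightCut α := by
  have hcut := isSigma2_of_ceIn hα
  set cut := {m | ∃ q : ℚ, Encodable.encode q = m ∧ α < (q : ℝ)}
  have h : IsSigma2 fun z : ℕ × ℕ => ∃ m, m ∈ cut ∧ ¬ RatCodeGT m z.1 z.2 :=
    .exists_snd ((hcut.comp (f := Prod.snd) (by fun_prop)).and (by fun_prop))
  refine h.of_iff fun ⟨a, s⟩ => ⟨fun haα => ?_, ?_⟩
  · refine ⟨_, ⟨(a : ℚ) / 2 ^ s, rfl, by push_cast; exact haα⟩, ?_⟩
    rw [ratCodeGT_encode]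
    push_cast
    exact lt_irrefl _
  · rintro ⟨_, ⟨q, rfl, hαq⟩, hqa⟩
    rw [ratCodeGT_encode, not_lt] at hqa
    exact hαq.trans_le hqa

theorem rightCeIn_of_hasSigma2RightCut {α : ℝ} (hα0 : 0 ≤ α) (hα : HasSigma2RightCut α) :
    RightCeIn (iterJump 1) α := by
  have h : IsSigma2 fun m => IsRatCode m ∧
      ∃ z : ℕ × ℕ, α < (z.1 : ℝ) / 2 ^ z.2 ∧ RatCodeGT m z.1 z.2 :=
    .and (by fun_prop) (.exists_snd ((hα.comp (f := Prod.snd) (by fun_prop)).and (by fun_prop)))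
  refine ceIn_of_isSigma2 (h.of_iff fun m => ?_)
  rw [isRatCode_iff]
  constructor
  · rintro ⟨q, rfl, hαq⟩
    obtain ⟨a, s, hαa, haq⟩ := exists_dyadic_btwn hα0 hαq
    exact ⟨⟨q, rfl⟩, (a, s), hαa, (ratCodeGT_encode _ _ _).2 haq⟩
  · rintro ⟨⟨q, rfl⟩, ⟨a, s⟩, hαa, haq⟩
    exact ⟨q, rfl, hαa.trans ((ratCodeGT_encode _ _ _).1 haq)⟩

end RightCuts

/-! ### Monotone approximations from above -/

section Approximations

/-- A function with a `Σ₂` graph, that is, one computable in `∅'`. -/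
def HasSigma2Graph (b : ℕ → ℕ) : Prop := IsSigma2 fun z : ℕ × ℕ => z.2 = b z.1

theorem hasSigma2Graph_find {P : ℕ → ℕ → Prop} (hP : IsSigma2 fun z : ℕ × ℕ => P z.1 z.2)
    (hP' : IsSigma2 fun z : ℕ × ℕ => ¬ P z.1 z.2) (hex : ∀ n, ∃ j, P n j) :
    HasSigma2Graph fun n => Nat.find (hex n) := by
  have h : IsSigma2 fun z : ℕ × ℕ => P z.1 z.2 ∧ ∀ i < z.2, ¬ P z.1 i :=
    hP.and (.forall_lt (by fun_prop)
      (hP'.comp (f := fun w : (ℕ × ℕ) × ℕ => (w.1.1, w.2)) (by fun_prop)))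
  exact h.of_iff fun z => eq_comm.trans (Nat.find_eq_iff _)

/-- The dyadic rationals `b n / 2 ^ n` decrease to `γ` from strictly above, and `b` is computable
in `∅'`. -/
structure IsUpperApprox (γ : ℝ) (b : ℕ → ℕ) : Prop where
  graph : HasSigma2Graph b
  lt : ∀ n, γ < (b n : ℝ) / 2 ^ n
  le_two_mul : ∀ n, b (n + 1) ≤ 2 * b n
  exists_lt : ∀ y, γ < y → ∃ n, (b n : ℝ) / 2 ^ n < y
  init_le : b 0 ≤ 2

theorem IsUpperApprox.antitone {γ : ℝ} {b : ℕ → ℕ} (h : IsUpperApprox γ b) :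
    Antitone fun n => (b n : ℝ) / 2 ^ n := by
  refine antitone_nat_of_succ_le fun n => ?_
  have hstep : (b (n + 1) : ℝ) ≤ 2 * b n := by exact_mod_cast h.le_two_mul n
  rw [pow_succ', div_mul_eq_div_div]
  gcongr
  linarith

/-- `j / 2 ^ n` is one of the upper bounds for `γ` verified by stage `n`: either `2`, or at least
some `a / 2 ^ s` such that `R ((a, s), k, ·)` holds, where `(a, s, k)` has code below `n`. -/
def IsStageBound (R : ((ℕ × ℕ) × ℕ) × ℕ → Prop) (n j : ℕ) : Prop :=
  j = 2 * 2 ^ n ∨ ∃ w : ℕ, w < n ∧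
    (∀ i, R (((w.unpair.1, w.unpair.2.unpair.1), w.unpair.2.unpair.2), i)) ∧
    w.unpair.1 * 2 ^ n ≤ j * 2 ^ w.unpair.2.unpair.1

section

variable {R : ((ℕ × ℕ) × ℕ) × ℕ → Prop}

theorem isSigma2_isStageBound (hR : PrimrecPred R) :
    IsSigma2 fun z : ℕ × ℕ => IsStageBound R z.1 z.2 := by
  unfold IsStageBound
  fun_prop

theorem isSigma2_not_isStageBound (hR : PrimrecPred R) :
    IsSigma2 fun z : ℕ × ℕ => ¬ IsStageBound R z.1 z.2 := by
  have h : IsSigma2 fun z : ℕ × ℕ => ¬ z.2 = 2 * 2 ^ z.1 ∧ ∀ w < z.1,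
      (∃ j, ¬ R (((w.unpair.1, w.unpair.2.unpair.1), w.unpair.2.unpair.2), j)) ∨
        ¬ w.unpair.1 * 2 ^ z.1 ≤ z.2 * 2 ^ w.unpair.2.unpair.1 := by fun_prop
  refine h.of_iff fun z => ?_
  simp only [IsStageBound, not_or, not_exists, not_and, ← not_forall, ← imp_iff_not_or]

variable {γ : ℝ} (hγR : ∀ z : ℕ × ℕ, γ < (z.1 : ℝ) / 2 ^ z.2 ↔ ∃ k, ∀ j, R ((z, k), j))
include hγR

theorem IsStageBound.lt {n j : ℕ} (hγ2 : γ < 2) (h : IsStageBound R n j) :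
    γ < (j : ℝ) / 2 ^ n := by
  rcases h with rfl | ⟨w, -, hw, hle⟩
  · simpa using hγ2
  · refine ((hγR (w.unpair.1, w.unpair.2.unpair.1)).2 ⟨_, hw⟩).trans_le ?_
    rw [div_le_div_iff₀ (by positivity) (by positivity)]
    exact_mod_cast hle

theorem exists_isStageBound_lt {y : ℝ} (hγ0 : 0 ≤ γ) (hy : γ < y) :
    ∃ n j, IsStageBound R n j ∧ (j : ℝ) / 2 ^ n < y := by
  obtain ⟨a, s, hγa, hay⟩ := exists_dyadic_btwn hγ0 hy
  obtain ⟨k, hk⟩ := (hγR (a, s)).1 hγa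
  set w := Nat.pair a (Nat.pair s k) with hw
  refine ⟨s + (w + 1), a * 2 ^ (w + 1), Or.inr ⟨w, by omega, by simpa [w] using hk, ?_⟩, ?_⟩
  · simp only [hw, Nat.unpair_pair]
    exact (by ring : _ = _).le
  · rw [Nat.cast_mul, Nat.cast_pow, Nat.cast_ofNat, pow_add _ s,
      mul_div_mul_right _ _ (by positivity)]
    exact hay

end

theorem IsStageBound.two_mul {R : ((ℕ × ℕ) × ℕ) × ℕ → Prop} {n j : ℕ}
    (h : IsStageBound R n j) : IsStageBound R (n + 1) (2 * j) := by
  rcases h with rfl | ⟨w, hw, hR, hle⟩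
  · exact Or.inl (by ring)
  · exact Or.inr ⟨w, Nat.lt_succ_of_lt hw, hR, by rw [pow_succ]; linarith⟩

theorem exists_isUpperApprox {γ : ℝ} (hγ0 : 0 ≤ γ) (hγ2 : γ < 2) (hγ : HasSigma2RightCut γ) :
    ∃ b, IsUpperApprox γ b := by
  obtain ⟨R, hR, hγR⟩ := hγ
  have hex (n : ℕ) : ∃ j, IsStageBound R n j := ⟨_, Or.inl rfl⟩
  refine ⟨fun n => Nat.find (hex n), ?_, fun n => (Nat.find_spec (hex n)).lt hγR hγ2,
    fun n => Nat.find_min' _ (Nat.find_spec (hex n)).two_mul, fun y hy => ?_,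
    Nat.find_min' _ (Or.inl (by norm_num))⟩
  · exact hasSigma2Graph_find (isSigma2_isStageBound hR) (isSigma2_not_isStageBound hR) hex
  · obtain ⟨n, j, hj, hjy⟩ := exists_isStageBound_lt hγR hγ0 hy
    refine ⟨n, hjy.trans_le' ?_⟩
    gcongr
    exact Nat.find_min' _ hj

end Approximations

/-! ### Binary expansions and the uniform measure -/

section BinaryExpansion

@[simp]
theorem length_initSeg (X : Cantor) (n : ℕ) : (initSeg X n).length = n := by simp [initSeg]

theorem initSeg_succ (X : Cantor) (n : ℕ) : initSeg X (n + 1) = initSeg X n ++ [X n] := by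
  simp [initSeg, List.range_succ]

theorem take_initSeg (X : Cantor) {n m : ℕ} (h : n ≤ m) : (initSeg X m).take n = initSeg X n := by
  simp only [initSeg, ← List.map_take, List.take_range, min_eq_left h]

theorem initSeg_prefix (X : Cantor) {n m : ℕ} (h : n ≤ m) : initSeg X n <+: initSeg X m :=
  take_initSeg X h ▸ List.take_prefix _ _

theorem prefix_initSeg_iff {σ : List Bool} {X : Cantor} {n : ℕ} :
    σ <+: initSeg X n ↔ σ.length ≤ n ∧ initSeg X σ.length = σ := by
  refine ⟨fun h => ?_, fun ⟨hle, h⟩ => h ▸ initSeg_prefix X (by simpa using hle)⟩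
  have hle : σ.length ≤ n := by simpa using h.length_le
  exact ⟨hle, by rw [← take_initSeg X hle, ← List.prefix_iff_eq_take.1 h]⟩

/-- The natural number with binary expansion `σ`, most significant bit first. -/
def binVal (σ : List Bool) : ℕ := Nat.ofDigits 2 (σ.reverse.map Bool.toNat)

theorem binVal_append (σ τ : List Bool) : binVal (σ ++ τ) = binVal σ * 2 ^ τ.length + binVal τ := by
  simp only [binVal, List.reverse_append, List.map_append, Nat.ofDigits_append, List.length_map,
    List.length_reverse]
  ring

theorem binVal_singleton (b : Bool) : binVal [b] = b.toNat := by simp [binVal]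

theorem map_toNat_lt_two (σ : List Bool) : ∀ d ∈ σ.map Bool.toNat, d < 2 := by
  simp only [List.mem_map]
  rintro _ ⟨b, -, rfl⟩
  exact b.toNat_lt

theorem binVal_lt (σ : List Bool) : binVal σ < 2 ^ σ.length := by
  simpa [binVal] using
    Nat.ofDigits_lt_base_pow_length one_lt_two (map_toNat_lt_two σ.reverse)

theorem eq_of_binVal_eq {σ τ : List Bool} (hl : σ.length = τ.length)
    (hv : binVal σ = binVal τ) : σ = τ := by
  have h := Nat.ofDigits_inj_of_len_eq one_lt_two (by simpa using hl)
    (map_toNat_lt_two σ.reverse) (map_toNat_lt_two τ.reverse) hv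
  have hinj : Function.Injective Bool.toNat := fun a b => by decide +revert
  exact List.reverse_injective (List.map_injective_iff.2 hinj h)

theorem binVal_append_add_one_le (σ τ : List Bool) :
    binVal (σ ++ τ) + 1 ≤ (binVal σ + 1) * 2 ^ τ.length := by
  rw [binVal_append]
  linarith [binVal_lt τ]

@[fun_prop]
theorem primrec_binVal : Primrec binVal := by
  have h : Primrec fun σ : List Bool =>
      (σ.reverse.map Bool.toNat).foldr (fun d n => d + 2 * n) 0 := by
    refine Primrec.list_foldr (g := fun _ => 0) (h := fun _ z => z.1 + 2 * z.2) ?_ (by fun_prop)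
      (Primrec.to₂ (f := fun w : List Bool × ℕ × ℕ => w.2.1 + 2 * w.2.2) (by fun_prop))
    exact Primrec.list_map Primrec.list_reverse (Primrec.dom_bool _ |>.comp Primrec.snd).to₂
  exact h.of_eq fun σ => (Nat.ofDigits_eq_foldr 2 _).symm

theorem binVal_initSeg_digits {x : ℝ} (hx : x ∈ Set.Ico 0 1) (n : ℕ) :
    binVal (initSeg (digits x) n) = ⌊x * 2 ^ n⌋₊ := by
  induction n with
  | zero => simp [initSeg, binVal, Nat.floor_eq_zero.2 hx.2]
  | succ n ih =>
    have hhalf : ⌊x * 2 ^ n⌋₊ = ⌊x * 2 ^ (n + 1)⌋₊ / 2 := by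
      rw [← Nat.floor_div_natCast]
      congr 1
      push_cast
      ring
    have hbit : (digits x n).toNat = ⌊x * 2 ^ (n + 1)⌋₊ % 2 := by
      rw [digits, ← Int.natCast_floor_eq_floor (by have := hx.1; positivity)]
      rcases Nat.mod_two_eq_zero_or_one ⌊x * 2 ^ (n + 1)⌋₊ with h | h <;> rw [h] <;> simp <;> omega
    rw [initSeg_succ, binVal_append, binVal_singleton, ih, hhalf, hbit, List.length_singleton,
      pow_one, mul_comm, Nat.div_add_mod]

theorem floor_mul_two_pow_lt {x : ℝ} (hx : x ∈ Set.Ico 0 1) (t : ℕ) : ⌊x * 2 ^ t⌋₊ < 2 ^ t := by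
  rw [← binVal_initSeg_digits hx]
  simpa using binVal_lt (initSeg (digits x) t)

/-- The binary string of length `t` with value `j`, for `j < 2 ^ t`. -/
def bits (j t : ℕ) : List Bool := (List.range t).map fun n => decide (j / 2 ^ (t - (n + 1)) % 2 = 1)

@[fun_prop]
theorem primrec_bits {α : Type*} [Primcodable α] {j t : α → ℕ} (hj : Primrec j) (ht : Primrec t) :
    Primrec fun x => bits (j x) (t x) := by
  unfold bits
  fun_prop

theorem bits_floor {x : ℝ} (hx : 0 ≤ x) (t : ℕ) : bits ⌊x * 2 ^ t⌋₊ t = initSeg (digits x) t := by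
  refine List.map_congr_left fun n hn => ?_
  have hpow : (2 : ℝ) ^ t = 2 ^ (n + 1) * (2 ^ (t - (n + 1)) : ℕ) := by
    rw [Nat.cast_pow, Nat.cast_ofNat, ← pow_add, Nat.add_sub_cancel' (List.mem_range.1 hn)]
  have hfloor : ⌊x * 2 ^ t⌋₊ / 2 ^ (t - (n + 1)) = ⌊x * 2 ^ (n + 1)⌋₊ := by
    rw [← Nat.floor_div_natCast, hpow, ← mul_assoc, mul_div_cancel_right₀ _ (by positivity)]
  rw [hfloor, digits, ← Int.natCast_floor_eq_floor (by positivity)]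
  norm_cast

/-- The dyadic interval of the reals in `[0, 1)` whose binary expansion extends `σ`. -/
def cell (σ : List Bool) : Set ℝ :=
  Set.Ico (binVal σ / 2 ^ σ.length) ((binVal σ + 1) / 2 ^ σ.length)

theorem floor_mul_two_pow_eq_iff {x : ℝ} (hx : 0 ≤ x) {j t : ℕ} :
    ⌊x * 2 ^ t⌋₊ = j ↔ x ∈ Set.Ico ((j : ℝ) / 2 ^ t) ((j + 1) / 2 ^ t) := by
  rw [Nat.floor_eq_iff (by positivity), Set.mem_Ico, div_le_iff₀ (by positivity),
    lt_div_iff₀ (by positivity)]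

theorem Ico_dyadic_subset {j t : ℕ} (hj : j < 2 ^ t) :
    Set.Ico ((j : ℝ) / 2 ^ t) ((j + 1) / 2 ^ t) ⊆ Set.Ico 0 1 := by
  refine Set.Ico_subset_Ico (by positivity) ?_
  rw [div_le_one (by positivity)]
  exact_mod_cast hj

theorem cell_subset (σ : List Bool) : cell σ ⊆ Set.Ico 0 1 := Ico_dyadic_subset (binVal_lt σ)

theorem initSeg_digits_eq_iff {σ : List Bool} {x : ℝ} (hx : x ∈ Set.Ico 0 1) :
    initSeg (digits x) σ.length = σ ↔ x ∈ cell σ := by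
  rw [cell, ← floor_mul_two_pow_eq_iff hx.1, ← binVal_initSeg_digits hx]
  exact ⟨congrArg binVal, eq_of_binVal_eq (length_initSeg _ _)⟩

/-- The affine bijection from `[0, 1)` onto the cell of `σ`, which prepends `σ` to the binary
expansion. -/
noncomputable def intoCell (σ : List Bool) (y : ℝ) : ℝ := (binVal σ + y) / 2 ^ σ.length

theorem intoCell_mem_cell_iff {σ : List Bool} {y : ℝ} :
    intoCell σ y ∈ cell σ ↔ y ∈ Set.Ico 0 1 := by
  have hpos : (0 : ℝ) < 2 ^ σ.length := by positivity
  simp only [intoCell, cell, Set.mem_Ico, div_le_div_iff_of_pos_right hpos,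
    div_lt_div_iff_of_pos_right hpos, add_lt_add_iff_left, le_add_iff_nonneg_right]

theorem initSeg_digits_intoCell (σ : List Bool) {y : ℝ} (hy : y ∈ Set.Ico 0 1) (n : ℕ) :
    initSeg (digits (intoCell σ y)) (σ.length + n) = σ ++ initSeg (digits y) n := by
  have hfloor : intoCell σ y * 2 ^ (σ.length + n) = y * 2 ^ n + (binVal σ * 2 ^ n : ℕ) := by
    rw [intoCell]
    push_cast
    field_simp
    ring
  refine eq_of_binVal_eq (by simp) ?_
  rw [binVal_initSeg_digits (cell_subset σ (intoCell_mem_cell_iff.2 hy)), hfloor,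
    Nat.floor_add_natCast (mul_nonneg hy.1 (by positivity)), binVal_append,
    binVal_initSeg_digits hy, length_initSeg, add_comm]

theorem volume_Ico_dyadic (j t : ℕ) :
    volume (Set.Ico ((j : ℝ) / 2 ^ t) ((j + 1) / 2 ^ t)) = ENNReal.ofReal (1 / 2 ^ t) := by
  rw [Real.volume_Ico, ← sub_div, add_sub_cancel_left]

theorem volume_floor_mem (C : ℕ → Prop) (t : ℕ) :
    volume {x : ℝ | x ∈ Set.Ico 0 1 ∧ C ⌊x * 2 ^ t⌋₊} =
      ENNReal.ofReal (Nat.count C (2 ^ t) / 2 ^ t) := by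
  have hunion : {x : ℝ | x ∈ Set.Ico 0 1 ∧ C ⌊x * 2 ^ t⌋₊} =
      ⋃ j ∈ (Finset.range (2 ^ t)).filter C, Set.Ico ((j : ℝ) / 2 ^ t) ((j + 1) / 2 ^ t) := by
    ext x
    simp only [Set.mem_ofPred_eq, Set.mem_iUnion, Finset.mem_filter, Finset.mem_range, exists_prop]
    constructor
    · rintro ⟨hx, hC⟩
      exact ⟨_, ⟨floor_mul_two_pow_lt hx t, hC⟩, (floor_mul_two_pow_eq_iff hx.1).1 rfl⟩
    · rintro ⟨j, ⟨hj, hC⟩, hx⟩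
      have hx01 := Ico_dyadic_subset hj hx
      exact ⟨hx01, by rwa [(floor_mul_two_pow_eq_iff hx01.1).2 hx]⟩
  rw [hunion, measure_biUnion_finset _ fun j _ => measurableSet_Ico]
  · rw [Finset.sum_congr rfl fun j _ => volume_Ico_dyadic j t, Finset.sum_const, nsmul_eq_mul,
      Nat.count_eq_card_filter_range, div_eq_mul_one_div (Finset.card _ : ℝ),
      ENNReal.ofReal_mul (by positivity), ENNReal.ofReal_natCast]
  · intro i hi j _ hij
    simp only [Finset.coe_filter, Finset.mem_range, Set.mem_ofPred_eq] at hi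
    refine Set.disjoint_left.2 fun x hxi hxj => hij ?_
    have hx := (Ico_dyadic_subset hi.1 hxi).1
    rw [← (floor_mul_two_pow_eq_iff hx).2 hxi, (floor_mul_two_pow_eq_iff hx).2 hxj]

theorem measurable_digits : Measurable digits := by
  refine measurable_pi_iff.2 fun n => ?_
  exact (measurable_of_countable fun z : ℤ => decide (z % 2 = 1)).comp
    (Int.measurable_floor.comp (measurable_id.mul_const _))

theorem measurableSet_initSeg_mem (T : Set (List Bool)) (n : ℕ) :
    MeasurableSet {X : Cantor | initSeg X n ∈ T} := by
  have hofFn : (fun X : Cantor => initSeg X n) = List.ofFn ∘ fun X (i : Fin n) => X i := by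
    funext X
    rw [Function.comp_apply, List.ofFn_eq_map, initSeg, ← List.map_coe_finRange_eq_range,
      List.map_map]
    rfl
  change MeasurableSet ((fun X : Cantor => initSeg X n) ⁻¹' T)
  rw [hofFn, Set.preimage_comp]
  exact (measurable_pi_iff.2 fun i => measurable_pi_apply _) (Set.toFinite _).measurableSet

end BinaryExpansion

/-! ### The probability of infinite output -/

section InfiniteOutput

theorem measurableSet_monoINF (U : MonoMachine) : MeasurableSet (MonoINF U) := by
  have h : MonoINF U =
      ⋂ k : ℕ, ⋃ n, {X | initSeg X n ∈ {σ | ∃ a, a ∈ U.f σ ∧ k ≤ a.length}} := by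
    ext X
    simp [MonoINF]
  rw [h]
  exact .iInter fun k => .iUnion fun n => measurableSet_initSeg_mem _ _

/-- The reals in `[0, 1)` whose binary expansion makes `U` produce infinite output. -/
def infReals (U : MonoMachine) : Set ℝ := {x | x ∈ Set.Ico 0 1 ∧ digits x ∈ MonoINF U}

theorem infReals_subset (U : MonoMachine) : infReals U ⊆ Set.Ico 0 1 := fun _ hx => hx.1

theorem muR_monoINF (U : MonoMachine) : muR (MonoINF U) = (volume (infReals U)).toReal := by
  have h := measurableSet_monoINF U
  rw [muR, mu, Measure.map_apply measurable_digits h, Measure.restrict_apply (measurable_digits h),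
    Set.inter_comm]
  rfl

theorem volume_le_one_of_subset {S : Set ℝ} (h : S ⊆ Set.Ico 0 1) : volume S ≤ 1 :=
  (measure_mono h).trans (by simp)

theorem volume_ne_top_of_subset {S : Set ℝ} (h : S ⊆ Set.Ico 0 1) : volume S ≠ ⊤ :=
  ((volume_le_one_of_subset h).trans_lt ENNReal.one_lt_top).ne

theorem muR_monoINF_nonneg (U : MonoMachine) : 0 ≤ muR (MonoINF U) := ENNReal.toReal_nonneg

theorem muR_monoINF_le_one (U : MonoMachine) : muR (MonoINF U) ≤ 1 := by
  rw [muR_monoINF]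
  exact ENNReal.toReal_le_of_le_ofReal zero_le_one
    (by simpa using volume_le_one_of_subset (infReals_subset U))

end InfiniteOutput

section RightCutOfProbability

open Nat.Partrec (Code)

theorem exists_code_eval_encode {f : List Bool →. List Bool} (hf : Partrec f) :
    ∃ c : Code, ∀ σ, c.eval (Encodable.encode σ) = (f σ).map Encodable.encode := by
  obtain ⟨c, hc⟩ := Code.exists_code.1 hf
  exact ⟨c, fun σ => by simp [hc]⟩

theorem isSigma1_le_length_output (U : MonoMachine) :
    IsSigma1 fun z : List Bool × ℕ => ∃ a, a ∈ U.f z.1 ∧ z.2 ≤ a.length := by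
  obtain ⟨c, hc⟩ := exists_code_eval_encode U.partrec
  refine ⟨fun w => ∃ v ∈ Code.evaln w.2 c (Encodable.encode w.1.1),
    ∃ a ∈ (Encodable.decode v : Option (List Bool)), w.1.2 ≤ a.length, by fun_prop, ?_⟩
  rintro ⟨σ, k⟩
  constructor
  · rintro ⟨a, ha, hk⟩
    obtain ⟨w, hw⟩ := Code.evaln_complete.1 (hc σ ▸ Part.mem_map Encodable.encode ha)
    exact ⟨w, _, hw, a, by simp, hk⟩
  · rintro ⟨w, v, hv, a, ha, hk⟩
    obtain ⟨a', ha', rfl⟩ := (Part.mem_map_iff _).1 (hc σ ▸ Code.evaln_sound hv)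
    rw [Encodable.encodek, Option.mem_some_iff] at ha
    exact ⟨a', ha', ha ▸ hk⟩

theorem primrec_count {α : Type*} [Primcodable α] {p : α → ℕ → Prop} [∀ x, DecidablePred (p x)]
    {f : α → ℕ} (hf : Primrec f) (hp : PrimrecPred fun z : α × ℕ => p z.1 z.2) :
    Primrec fun x => Nat.count (p x) (f x) := by
  have : PrimrecPred fun z : α × ℕ × ℕ => p z.1 z.2.1 :=
    PrimrecPred.comp (f := fun z : α × ℕ × ℕ => (z.1, z.2.1)) hp (by fun_prop)
  have hstep : Primrec fun z : α × ℕ × ℕ => z.2.2 + if p z.1 z.2.1 then 1 else 0 := by fun_prop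
  refine ((Primrec.nat_rec (Primrec.const 0) hstep.to₂).comp Primrec.id hf).of_eq fun x => ?_
  rw [id]
  induction f x with
  | zero => rfl
  | succ n ih => rw [Nat.count_succ, ← ih]

/-- Stage `t` of the search for an initial segment, of the number `x` in the cell of length `t` with
index `j`, that satisfies the predicate with `Σ₁` matrix `R`. -/
def FoundByStage (R : (List Bool × ℕ) × ℕ → Prop) (k t j : ℕ) : Prop :=
  ∃ u < t + 1, ∃ w < t + 1, R (((bits j t).take u, k), w)

variable {P : List Bool × ℕ → Prop} {R : (List Bool × ℕ) × ℕ → Prop}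

theorem foundByStage_floor_iff {k t : ℕ} {x : ℝ} (hx : 0 ≤ x) :
    FoundByStage R k t ⌊x * 2 ^ t⌋₊ ↔
      ∃ u < t + 1, ∃ w < t + 1, R ((initSeg (digits x) u, k), w) := by
  rw [FoundByStage, bits_floor hx]
  refine exists_congr fun u => and_congr_right fun hu => ?_
  rw [take_initSeg _ (Nat.lt_succ_iff.1 hu)]

theorem volume_exists_initSeg (hPR : ∀ z, P z ↔ ∃ j, R (z, j)) (k : ℕ) :
    volume {x : ℝ | x ∈ Set.Ico 0 1 ∧ ∃ n, P (initSeg (digits x) n, k)} =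
      ⨆ t, ENNReal.ofReal (Nat.count (FoundByStage R k t) (2 ^ t) / 2 ^ t) := by
  have hunion : {x : ℝ | x ∈ Set.Ico 0 1 ∧ ∃ n, P (initSeg (digits x) n, k)} =
      ⋃ t, {x | x ∈ Set.Ico 0 1 ∧ FoundByStage R k t ⌊x * 2 ^ t⌋₊} := by
    ext x
    simp only [Set.mem_iUnion, Set.mem_ofPred_eq, exists_and_left]
    refine and_congr_right fun hx => ?_
    simp only [foundByStage_floor_iff hx.1, hPR]
    constructor
    · rintro ⟨n, w, h⟩
      exact ⟨max n w, n, by omega, w, by omega, h⟩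
    · rintro ⟨t, u, -, w, -, h⟩
      exact ⟨u, w, h⟩
  have hmono : Monotone fun t => {x : ℝ | x ∈ Set.Ico 0 1 ∧ FoundByStage R k t ⌊x * 2 ^ t⌋₊} := by
    rintro t t' ht x ⟨hx, h⟩
    refine ⟨hx, ?_⟩
    rw [foundByStage_floor_iff hx.1] at h ⊢
    obtain ⟨u, hu, w, hw, h⟩ := h
    exact ⟨u, by omega, w, by omega, h⟩
  simp only [hunion, hmono.measure_iUnion, volume_floor_mem]

theorem isSigma2_volume_exists_initSeg_le (hP : IsSigma1 P) :
    IsSigma2 fun z : ℕ × ℕ × ℕ =>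
      volume {x : ℝ | x ∈ Set.Ico 0 1 ∧ ∃ n, P (initSeg (digits x) n, z.1)} ≤
        ENNReal.ofReal (z.2.1 / 2 ^ z.2.2) := by
  obtain ⟨R, hR, hPR⟩ := hP
  have hcount : Primrec fun z : ℕ × ℕ => Nat.count (FoundByStage R z.1 z.2) (2 ^ z.2) := by
    refine primrec_count (by fun_prop) ?_
    unfold FoundByStage
    fun_prop
  have h : IsSigma2 fun z : ℕ × ℕ × ℕ => ∀ t,
      Nat.count (FoundByStage R z.1 t) (2 ^ t) * 2 ^ z.2.2 ≤ z.2.1 * 2 ^ t := by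
    have := hcount.comp (g := fun w : (ℕ × ℕ × ℕ) × ℕ => (w.1.1, w.2)) (by fun_prop)
    fun_prop
  refine h.of_iff fun z => ?_
  rw [volume_exists_initSeg hPR, iSup_le_iff]
  refine forall_congr' fun t => ?_
  rw [ENNReal.ofReal_le_ofReal_iff (by positivity),
    div_le_div_iff₀ (by positivity) (by positivity)]
  norm_cast

theorem volume_infReals_eq_iInf (U : MonoMachine) :
    volume (infReals U) = ⨅ k, volume {x : ℝ | x ∈ Set.Ico 0 1 ∧
      ∃ n, ∃ a, a ∈ U.f (initSeg (digits x) n) ∧ k ≤ a.length} := by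
  have hinter : infReals U = ⋂ k, {x : ℝ | x ∈ Set.Ico 0 1 ∧
      ∃ n, ∃ a, a ∈ U.f (initSeg (digits x) n) ∧ k ≤ a.length} := by
    ext x
    simp only [Set.mem_iInter, Set.mem_ofPred_eq, forall_and, forall_const]
    rfl
  rw [hinter]
  refine Antitone.measure_iInter ?_ (fun k => ?_) ⟨0, volume_ne_top_of_subset fun x hx => hx.1⟩
  · rintro k k' hk x ⟨hx, n, a, ha, hle⟩
    exact ⟨hx, n, a, ha, hk.trans hle⟩
  · have hmeas : MeasurableSet {X : Cantor | ∃ n, ∃ a, a ∈ U.f (initSeg X n) ∧ k ≤ a.length} := by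
      rw [Set.ofPred_exists]
      exact .iUnion fun n => measurableSet_initSeg_mem {σ | ∃ a, a ∈ U.f σ ∧ k ≤ a.length} n
    exact (measurableSet_Ico.inter (measurable_digits hmeas)).nullMeasurableSet

theorem hasSigma2RightCut_muR_monoINF (U : MonoMachine) :
    HasSigma2RightCut (muR (MonoINF U)) := by
  let S (k : ℕ) : Set ℝ := {x | x ∈ Set.Ico 0 1 ∧
    ∃ n, ∃ a, a ∈ U.f (initSeg (digits x) n) ∧ k ≤ a.length}
  have hS (k : ℕ) : volume (S k) ≠ ⊤ := volume_ne_top_of_subset fun x hx => hx.1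
  have hle := isSigma2_volume_exists_initSeg_le (isSigma1_le_length_output U)
  have h : IsSigma2 fun z : ℕ × ℕ => ∃ y : ℕ × ℕ × ℕ, y.2.1 * 2 ^ z.2 < z.1 * 2 ^ y.2.2 ∧
      volume (S y.1) ≤ ENNReal.ofReal (y.2.1 / 2 ^ y.2.2) :=
    .exists_snd (.and (by fun_prop) (hle.comp (f := fun w : (ℕ × ℕ) × ℕ × ℕ × ℕ => w.2)
      (by fun_prop)))
  refine h.of_iff fun ⟨m, s⟩ => ?_
  change muR (MonoINF U) < (m : ℝ) / 2 ^ s ↔ _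
  rw [muR_monoINF, ← ENNReal.lt_ofReal_iff_toReal_lt (volume_ne_top_of_subset (infReals_subset U)),
    volume_infReals_eq_iInf, iInf_lt_iff]
  have hcompare (m' s' : ℕ) : m' * 2 ^ s < m * 2 ^ s' ↔ (m' : ℝ) / 2 ^ s' < m / 2 ^ s := by
    rw [div_lt_div_iff₀ (by positivity) (by positivity)]
    norm_cast
  constructor
  · rintro ⟨k, hk⟩
    obtain ⟨m', s', hlow, hhigh⟩ := exists_dyadic_btwn ENNReal.toReal_nonneg
      ((ENNReal.lt_ofReal_iff_toReal_lt (hS k)).1 hk)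
    exact ⟨(k, m', s'), (hcompare m' s').2 hhigh,
      ((ENNReal.lt_ofReal_iff_toReal_lt (hS k)).2 hlow).le⟩
  · rintro ⟨⟨k, m', s'⟩, hhigh, hlow⟩
    exact ⟨k, hlow.trans_lt ((ENNReal.ofReal_lt_ofReal_iff_of_nonneg (by positivity)).2
      ((hcompare m' s').1 hhigh))⟩

end RightCutOfProbability

section CutMachine

variable {R : ((ℕ × ℕ) × ℕ) × ℕ → Prop}

/-- Let `γ < a / 2 ^ s ↔ ∃ k, ∀ j, R (((a, s), k), j)`. The string `σ` passes the test `(a, s, k)`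
if it is long enough to refute the candidate witness `k`, or if its cell lies below `a / 2 ^ s`.
Thus the reals below `γ` pass every test, and those above `γ` fail one. -/
def PassesTest (R : ((ℕ × ℕ) × ℕ) × ℕ → Prop) (σ : List Bool) (z : ℕ × ℕ × ℕ) : Prop :=
  (∃ j < σ.length, ¬ R (((z.1, z.2.1), z.2.2), j)) ∨
    (binVal σ + 1) * 2 ^ z.2.1 ≤ z.1 * 2 ^ σ.length

theorem PassesTest.mono {σ τ : List Bool} {z : ℕ × ℕ × ℕ} (h : PassesTest R σ z)
    (hστ : σ <+: τ) : PassesTest R τ z := by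
  obtain ⟨ρ, rfl⟩ := hστ
  rcases h with ⟨j, hj, hR⟩ | h
  · exact .inl ⟨j, hj.trans_le (by simp), hR⟩
  · refine .inr ?_
    calc (binVal (σ ++ ρ) + 1) * 2 ^ z.2.1
        ≤ (binVal σ + 1) * 2 ^ ρ.length * 2 ^ z.2.1 :=
          Nat.mul_le_mul_right _ (binVal_append_add_one_le σ ρ)
      _ = (binVal σ + 1) * 2 ^ z.2.1 * 2 ^ ρ.length := by ring
      _ ≤ z.1 * 2 ^ σ.length * 2 ^ ρ.length := Nat.mul_le_mul_right _ h
      _ = z.1 * 2 ^ (σ ++ ρ).length := by rw [List.length_append]; ring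

/-- The number of `m < σ.length` such that `σ` passes all tests with code at most `m`. -/
noncomputable def passedTests (R : ((ℕ × ℕ) × ℕ) × ℕ → Prop) (σ : List Bool) : ℕ :=
  Nat.count (fun m => ∀ i < m + 1, PassesTest R σ (i.unpair.1, i.unpair.2.unpair)) σ.length

theorem passedTests_le_of_prefix {σ τ : List Bool} (h : σ <+: τ) :
    passedTests R σ ≤ passedTests R τ :=
  (Nat.count_mono_left fun _ _ hm i hi => (hm i hi).mono h).trans
    (Nat.count_monotone _ h.length_le)

theorem primrec_passedTests (hR : PrimrecPred R) : Primrec (passedTests R) := by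
  unfold passedTests
  refine primrec_count (f := List.length) (by fun_prop) ?_
  unfold PassesTest
  fun_prop

theorem exists_le_of_lt_count {p : ℕ → Prop} [DecidablePred p] {k n : ℕ} (h : k < Nat.count p n) :
    ∃ m, k ≤ m ∧ p m := by
  by_contra! hfail
  have hsub : (Finset.range n).filter p ⊆ Finset.range k := fun m hm =>
    Finset.mem_range.2 (not_le.1 fun hle => hfail m hle (Finset.mem_filter.1 hm).2)
  have hcard := Finset.card_le_card hsub
  rw [← Nat.count_eq_card_filter_range, Finset.card_range] at hcard
  omega

theorem forall_exists_le_passedTests_iff {X : Cantor} :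
    (∀ k, ∃ n, k ≤ passedTests R (initSeg X n)) ↔ ∀ z, ∃ n, PassesTest R (initSeg X n) z := by
  constructor
  · rintro h ⟨a, s, k⟩
    obtain ⟨n, hn⟩ := h (Nat.pair a (Nat.pair s k) + 1)
    refine ⟨n, ?_⟩
    obtain ⟨m, hle, hm⟩ := exists_le_of_lt_count hn
    simpa using hm _ (Nat.lt_succ_of_le hle)
  · intro h k
    choose n hn using fun i : ℕ => h (i.unpair.1, i.unpair.2.unpair)
    obtain ⟨N, hN⟩ : ∃ N, ∀ i < k, n i ≤ N :=
      ⟨(Finset.range k).sup n, fun i hi => Finset.le_sup (Finset.mem_range.2 hi)⟩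
    refine ⟨max N k, ?_⟩
    have hall : Nat.count (fun m => ∀ i < m + 1,
        PassesTest R (initSeg X (max N k)) (i.unpair.1, i.unpair.2.unpair)) k = k :=
      Nat.count_iff_forall.2 fun m hm i hi =>
        (hn i).mono (initSeg_prefix X ((hN i (by omega)).trans (le_max_left N k)))
    rw [passedTests, length_initSeg]
    exact hall.ge.trans (Nat.count_monotone _ (le_max_right N k))

/-- The machine that prints a `1` whenever its input has passed one more test. -/
noncomputable def cutMachine (hR : PrimrecPred R) : MonoMachine where
  f σ := Part.some ((List.range (passedTests R σ)).map fun _ => true)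
  partrec := by
    have hlength := primrec_passedTests hR
    have houtput : Primrec fun σ => (List.range (passedTests R σ)).map fun _ => true := by
      fun_prop
    exact houtput.to_comp.partrec
  mono := by
    intro σ τ a b h ha hb
    rw [Part.mem_some_iff] at ha hb
    rw [ha, hb]
    exact (initSeg_prefix (fun _ => true) (passedTests_le_of_prefix h) :)

theorem mem_monoINF_cutMachine_iff (hR : PrimrecPred R) {X : Cantor} :
    X ∈ MonoINF (cutMachine hR) ↔ ∀ z, ∃ n, PassesTest R (initSeg X n) z := by
  rw [← forall_exists_le_passedTests_iff]
  exact forall_congr' fun k => exists_congr fun n => by simp [cutMachine]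

theorem exists_passesTest_of_lt {γ x : ℝ}
    (hγ : ∀ z : ℕ × ℕ, γ < (z.1 : ℝ) / 2 ^ z.2 ↔ ∃ k, ∀ j, R ((z, k), j))
    (hx : x ∈ Set.Ico 0 1) (hxγ : x < γ) (z : ℕ × ℕ × ℕ) :
    ∃ n, PassesTest R (initSeg (digits x) n) z := by
  by_cases hz : ∃ j, ¬ R (((z.1, z.2.1), z.2.2), j)
  · obtain ⟨j, hj⟩ := hz
    exact ⟨j + 1, .inl ⟨j, by simp, hj⟩⟩
  push Not at hz
  have hxz : x < (z.1 : ℝ) / 2 ^ z.2.1 := hxγ.trans ((hγ (z.1, z.2.1)).2 ⟨_, hz⟩)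
  obtain ⟨n, hn⟩ := exists_pow_lt_of_lt_one (sub_pos.2 hxz) (one_half_lt_one (α := ℝ))
  refine ⟨n, .inr ?_⟩
  rw [binVal_initSeg_digits hx, length_initSeg]
  have hfloor : ((⌊x * 2 ^ n⌋₊ + 1 : ℕ) : ℝ) ≤ z.1 / 2 ^ z.2.1 * 2 ^ n := by
    have hn' : 1 < (z.1 / 2 ^ z.2.1 - x) * 2 ^ n := by
      rwa [one_div, inv_pow, inv_lt_iff_one_lt_mul₀ (by positivity)] at hn
    have := Nat.floor_le (mul_nonneg hx.1 (pow_nonneg zero_le_two n))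
    push_cast
    linarith
  rw [div_mul_eq_mul_div, le_div_iff₀ (by positivity)] at hfloor
  exact_mod_cast hfloor

theorem exists_not_passesTest_of_gt {γ x : ℝ}
    (hγ : ∀ z : ℕ × ℕ, γ < (z.1 : ℝ) / 2 ^ z.2 ↔ ∃ k, ∀ j, R ((z, k), j))
    (hx : x ∈ Set.Ico 0 1) (hxγ : γ < x) :
    ∃ z, ∀ n, ¬ PassesTest R (initSeg (digits x) n) z := by
  obtain ⟨a, s, ha, hax⟩ : ∃ a s : ℕ, γ < (a : ℝ) / 2 ^ s ∧ (a : ℝ) / 2 ^ s ≤ x := by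
    rcases lt_or_ge γ 0 with hγ0 | hγ0
    · exact ⟨0, 0, by simpa using hγ0, by simpa using hx.1⟩
    · obtain ⟨a, s, ha, hax⟩ := exists_dyadic_btwn hγ0 hxγ
      exact ⟨a, s, ha, hax.le⟩
  obtain ⟨k, hk⟩ := (hγ (a, s)).1 ha
  refine ⟨(a, s, k), ?_⟩
  rintro n (⟨j, -, hj⟩ | h)
  · exact hj (hk j)
  rw [binVal_initSeg_digits hx, length_initSeg] at h
  have hle : ((⌊x * 2 ^ n⌋₊ : ℝ) + 1) * 2 ^ s ≤ a * 2 ^ n := by exact_mod_cast h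
  have hlt : x * 2 ^ n < ⌊x * 2 ^ n⌋₊ + 1 := Nat.lt_floor_add_one _
  rw [div_le_iff₀ (by positivity)] at hax
  have : a * 2 ^ n < (a * 2 ^ n : ℝ) :=
    calc (a * 2 ^ n : ℝ) ≤ x * 2 ^ s * 2 ^ n := by gcongr
      _ = x * 2 ^ n * 2 ^ s := by ring
      _ < (⌊x * 2 ^ n⌋₊ + 1) * 2 ^ s := by gcongr
      _ ≤ a * 2 ^ n := hle
  exact this.false

theorem exists_monoMachine_digits_mem_monoINF {γ : ℝ} (hγ : HasSigma2RightCut γ) :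
    ∃ V : MonoMachine, ∀ x ∈ Set.Ico (0 : ℝ) 1,
      (x < γ → digits x ∈ MonoINF V) ∧ (γ < x → digits x ∉ MonoINF V) := by
  obtain ⟨R, hR, hγ⟩ := hγ
  refine ⟨cutMachine hR, fun x hx => ?_⟩
  simp only [mem_monoINF_cutMachine_iff, not_forall, not_exists]
  exact ⟨exists_passesTest_of_lt hγ hx, exists_not_passesTest_of_gt hγ hx⟩

theorem exists_muR_monoINF_eq {γ : ℝ} (h0 : 0 ≤ γ) (h1 : γ ≤ 1) (hγ : HasSigma2RightCut γ) :
    ∃ V : MonoMachine, muR (MonoINF V) = γ := by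
  obtain ⟨V, hV⟩ := exists_monoMachine_digits_mem_monoINF hγ
  refine ⟨V, ?_⟩
  have hlower : Set.Ico 0 γ ⊆ infReals V := fun x hx =>
    have hx01 : x ∈ Set.Ico 0 1 := ⟨hx.1, hx.2.trans_le h1⟩
    ⟨hx01, (hV x hx01).1 hx.2⟩
  have hupper : infReals V ⊆ Set.Icc 0 γ := fun x hx =>
    ⟨hx.1.1, not_lt.1 fun hlt => (hV x hx.1).2 hlt hx.2⟩
  have hvol : volume (infReals V) = ENNReal.ofReal γ :=
    le_antisymm (by simpa using measure_mono (μ := volume) hupper)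
      (by simpa using measure_mono (μ := volume) hlower)
  rw [muR_monoINF, hvol, ENNReal.toReal_ofReal h0]

end CutMachine

/-! ### Machines above and off a string -/

section RestrictedMachine

theorem mem_monoINF_iff_of_le {U : MonoMachine} {X : Cantor} (l : ℕ) :
    X ∈ MonoINF U ↔ ∀ k, ∃ n a, l ≤ n ∧ a ∈ U.f (initSeg X n) ∧ k ≤ a.length := by
  refine ⟨fun h k => ?_, fun h k => ?_⟩
  · have hfin : {m | ∃ n < l, ∃ a, a ∈ U.f (initSeg X n) ∧ a.length = m}.Finite := by
      have hunion : {m | ∃ n < l, ∃ a, a ∈ U.f (initSeg X n) ∧ a.length = m} =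
          ⋃ n ∈ Set.Iio l, {m | ∃ a, a ∈ U.f (initSeg X n) ∧ a.length = m} := by
        ext m
        simp
      rw [hunion]
      refine (Set.finite_Iio l).biUnion fun n _ => Set.Subsingleton.finite ?_
      rintro _ ⟨a, ha, rfl⟩ _ ⟨b, hb, rfl⟩
      rw [Part.mem_unique ha hb]
    obtain ⟨B, hB⟩ := hfin.bddAbove
    obtain ⟨n, a, ha, hle⟩ := h (max k (B + 1))
    refine ⟨n, a, not_lt.1 fun hn => ?_, ha, by omega⟩
    have := hB ⟨n, hn, a, ha, rfl⟩
    omega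
  · obtain ⟨n, a, -, h⟩ := h k
    exact ⟨n, a, h⟩

theorem intoCell_mem_infReals_iff {U V : MonoMachine} {σ : List Bool}
    (h : ∀ τ, U.f (σ ++ τ) = V.f τ) {y : ℝ} (hy : y ∈ Set.Ico 0 1) :
    intoCell σ y ∈ infReals U ↔ y ∈ infReals V := by
  have hmem := cell_subset σ (intoCell_mem_cell_iff.2 hy)
  simp only [infReals, Set.mem_ofPred_eq, hmem, hy, true_and]
  rw [mem_monoINF_iff_of_le σ.length]
  refine forall_congr' fun k => ⟨?_, ?_⟩
  · rintro ⟨n, a, hn, ha, hk⟩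
    obtain ⟨m, rfl⟩ := Nat.exists_eq_add_of_le hn
    rw [initSeg_digits_intoCell σ hy, h] at ha
    exact ⟨m, a, ha, hk⟩
  · rintro ⟨n, a, ha, hk⟩
    refine ⟨σ.length + n, a, by omega, ?_, hk⟩
    rwa [initSeg_digits_intoCell σ hy, h]

theorem volume_infReals_inter_cell {U V : MonoMachine} {σ : List Bool}
    (h : ∀ τ, U.f (σ ++ τ) = V.f τ) :
    (volume (infReals U ∩ cell σ)).toReal = muR (MonoINF V) / 2 ^ σ.length := by
  have hpre : infReals V = (fun y => (2 ^ σ.length : ℝ)⁻¹ * y) ⁻¹'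
      ((fun z => (binVal σ : ℝ) / 2 ^ σ.length + z) ⁻¹' (infReals U ∩ cell σ)) := by
    ext y
    have hy : (binVal σ : ℝ) / 2 ^ σ.length + (2 ^ σ.length : ℝ)⁻¹ * y = intoCell σ y := by
      rw [intoCell]
      field_simp
    rw [Set.mem_preimage, Set.mem_preimage, hy, Set.mem_inter_iff, intoCell_mem_cell_iff]
    exact ⟨fun hV => ⟨(intoCell_mem_infReals_iff h hV.1).2 hV, hV.1⟩,
      fun hU => (intoCell_mem_infReals_iff h hU.2).1 hU.1⟩
  rw [muR_monoINF, hpre, Real.volume_preimage_mul_left (by positivity), measure_preimage_add,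
    ENNReal.toReal_mul, ENNReal.toReal_ofReal (by positivity), inv_inv, abs_of_pos (by positivity)]
  field_simp

/-- The restriction of the machine `U` to the strings that do not extend `σ`. -/
noncomputable def MonoMachine.removeCone (U : MonoMachine) (σ : List Bool) : MonoMachine where
  f τ := if σ <+: τ then Part.none else U.f τ
  partrec := by
    have hprefix : PrimrecPred fun τ : List Bool => σ <+: τ := by fun_prop
    refine (Partrec.cond hprefix.decide.to_comp Partrec.none U.partrec).of_eq fun τ => ?_
    by_cases hτ : σ <+: τ <;> simp [hτ]
  mono := by
    intro ρ τ a b h ha hb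
    by_cases hτ : σ <+: τ
    · simp [hτ] at hb
    · have hρ : ¬ σ <+: ρ := fun hρ => hτ (hρ.trans h)
      rw [if_neg hρ] at ha
      rw [if_neg hτ] at hb
      exact U.mono h ha hb

theorem mem_removeCone_f_iff {U : MonoMachine} {σ τ a : List Bool} :
    a ∈ (U.removeCone σ).f τ ↔ ¬ σ <+: τ ∧ a ∈ U.f τ := by
  by_cases h : σ <+: τ <;> simp [MonoMachine.removeCone, h]

theorem infReals_removeCone (U : MonoMachine) (σ : List Bool) :
    infReals (U.removeCone σ) = infReals U \ cell σ := by
  ext x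
  simp only [infReals, Set.mem_sdiff, Set.mem_ofPred_eq, and_assoc]
  refine and_congr_right fun hx => ?_
  rw [← initSeg_digits_eq_iff hx]
  by_cases hσ : initSeg (digits x) σ.length = σ
  · simp only [hσ, not_true, and_false, iff_false]
    rw [mem_monoINF_iff_of_le σ.length]
    intro h
    obtain ⟨n, a, hn, ha, -⟩ := h 0
    exact (mem_removeCone_f_iff.1 ha).1 (prefix_initSeg_iff.2 ⟨hn, hσ⟩)
  · simp only [hσ, not_false_iff, and_true]
    refine forall_congr' fun k => exists_congr fun n => exists_congr fun a => ?_
    rw [mem_removeCone_f_iff, and_iff_right fun h => hσ (prefix_initSeg_iff.1 h).2]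

theorem measurableSet_cell (σ : List Bool) : MeasurableSet (cell σ) := measurableSet_Ico

theorem muR_monoINF_eq_add {U V : MonoMachine} {σ : List Bool} (h : ∀ τ, U.f (σ ++ τ) = V.f τ) :
    muR (MonoINF U) = muR (MonoINF V) / 2 ^ σ.length + muR (MonoINF (U.removeCone σ)) := by
  rw [← volume_infReals_inter_cell h, muR_monoINF U, muR_monoINF (U.removeCone σ),
    infReals_removeCone, ← ENNReal.toReal_add, measure_inter_add_sdiff _ (measurableSet_cell σ)]
  · exact volume_ne_top_of_subset (Set.inter_subset_left.trans (infReals_subset U))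
  · exact volume_ne_top_of_subset (Set.sdiff_subset.trans (infReals_subset U))

end RestrictedMachine

/-! ### A random real with `Σ₂` right cut -/

section DyadicIntervals

/-- The open interval with endpoints `l / 2 ^ s` and `r / 2 ^ s`, where `I = (l, r, s)`. -/
def dyadicIoo (I : ℕ × ℕ × ℕ) : Set ℝ := Set.Ioo ((I.1 : ℝ) / 2 ^ I.2.2) ((I.2.1 : ℝ) / 2 ^ I.2.2)

/-- The length of `dyadicIoo I`. The subtraction is truncated, since empty intervals have
length `0`. -/
noncomputable def dyadicLength (I : ℕ × ℕ × ℕ) : ℝ := ((I.2.1 - I.1 : ℕ) : ℝ) / 2 ^ I.2.2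

theorem dyadicLength_nonneg (I : ℕ × ℕ × ℕ) : 0 ≤ dyadicLength I := by
  unfold dyadicLength
  positivity

theorem volume_dyadicIoo (I : ℕ × ℕ × ℕ) :
    volume (dyadicIoo I) = ENNReal.ofReal (dyadicLength I) := by
  rw [dyadicIoo, Real.volume_Ioo, dyadicLength, ← sub_div]
  rcases le_total I.1 I.2.1 with h | h
  · rw [Nat.cast_sub h]
  · rw [Nat.sub_eq_zero_of_le h, Nat.cast_zero, zero_div, ENNReal.ofReal_zero,
      ENNReal.ofReal_of_nonpos]
    exact div_nonpos_of_nonpos_of_nonneg (sub_nonpos.2 (by exact_mod_cast h)) (by positivity)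

theorem volume_biUnion_dyadicIoo_le {S : Set (ℕ × ℕ × ℕ)} {c : ℝ}
    (h : ∀ F : Finset (ℕ × ℕ × ℕ), ↑F ⊆ S → ∑ I ∈ F, dyadicLength I ≤ c) :
    volume (⋃ I ∈ S, dyadicIoo I) ≤ ENNReal.ofReal c := by
  refine (measure_biUnion_le volume S.to_countable dyadicIoo).trans ?_
  rw [ENNReal.tsum_eq_iSup_sum]
  refine iSup_le fun F => ?_
  simp only [volume_dyadicIoo]
  rw [← ENNReal.ofReal_sum_of_nonneg fun _ _ => dyadicLength_nonneg _]
  refine ENNReal.ofReal_le_ofReal ?_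
  simpa using h (F.map (Function.Embedding.subtype _)) (by simp)

theorem Icc_subset_dyadicIoo_iff {I : ℕ × ℕ × ℕ} {t j : ℕ} :
    Set.Icc ((j : ℝ) / 2 ^ t) ((j + 1) / 2 ^ t) ⊆ dyadicIoo I ↔
      I.1 * 2 ^ t < j * 2 ^ I.2.2 ∧ (j + 1) * 2 ^ I.2.2 < I.2.1 * 2 ^ t := by
  rw [dyadicIoo, Set.Icc_subset_Ioo_iff (by gcongr; linarith),
    div_lt_div_iff₀ (by positivity) (by positivity),
    div_lt_div_iff₀ (by positivity) (by positivity)]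
  norm_cast

@[fun_prop]
theorem primrec_sum {α : Type*} [Primcodable α] {f : α → List ℕ} (hf : Primrec f) :
    Primrec fun x => (f x).sum := by
  simp only [List.sum_eq_foldr]
  exact Primrec.list_foldr (h := fun _ z => z.1 + z.2) hf (.const 0)
    (Primrec.nat_add.comp (Primrec.fst.comp Primrec.snd) (Primrec.snd.comp Primrec.snd))

theorem cast_sum_scaled_eq {Z : List (ℕ × ℕ × ℕ)} {t : ℕ} (h : ∀ I ∈ Z, I.2.2 ≤ t) :
    (((Z.map fun I => (I.2.1 - I.1) * 2 ^ (t - I.2.2)).sum : ℕ) : ℝ) =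
      (Z.map dyadicLength).sum * 2 ^ t := by
  rw [← List.sum_map_mul_right, Nat.cast_list_sum, List.map_map]
  congr 1
  refine List.map_congr_left fun I hI => ?_
  rw [Function.comp_apply, dyadicLength, Nat.cast_mul, Nat.cast_pow, Nat.cast_ofNat,
    pow_sub₀ _ two_ne_zero (h I hI)]
  ring

@[fun_prop]
theorem primrecPred_sum_dyadicLength_le {α : Type*} [Primcodable α]
    {Z : α → List (ℕ × ℕ × ℕ)} {i : α → ℕ} (hZ : Primrec Z) (hi : Primrec i) :
    PrimrecPred fun x => ((Z x).map dyadicLength).sum ≤ (2 : ℝ)⁻¹ ^ i x := by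
  let t (x : α) : ℕ := ((Z x).map fun I => I.2.2).sum
  have ht : Primrec t := by fun_prop
  have h : PrimrecPred fun x =>
      ((Z x).map fun I => (I.2.1 - I.1) * 2 ^ (t x - I.2.2)).sum * 2 ^ i x ≤ 2 ^ t x := by fun_prop
  refine h.of_eq fun x => ?_
  have hle : ∀ I ∈ Z x, I.2.2 ≤ t x := fun I hI => List.le_sum_of_mem (List.mem_map_of_mem hI)
  rw [← @Nat.cast_le ℝ, Nat.cast_mul, cast_sum_scaled_eq hle, inv_pow, ← one_div,
    le_div_iff₀ (by positivity)]
  push_cast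
  rw [mul_right_comm, mul_le_iff_le_one_left (by positivity)]

end DyadicIntervals

section UniversalTest

theorem IsSigma2.forall_encode_le {α β : Type*} [Primcodable α] [Primcodable β]
    {P : α → β → Prop} {f : α → ℕ} (hf : Primrec f) (hP : IsSigma2 fun z : α × β => P z.1 z.2) :
    IsSigma2 fun x => ∀ y, Encodable.encode y ≤ f x → P x y := by
  have hcode : PrimrecPred fun z : α × ℕ => ¬ ∃ y ∈ (Encodable.decode z.2 : Option β),
      Encodable.encode y = z.2 := by
    have := Primrec.decode (α := β)
    have := Primrec.encode (α := β)
    fun_prop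
  have hval : IsSigma2 fun z : α × ℕ => ∃ y : β, Encodable.encode y = z.2 ∧ P z.1 y := by
    have := Primrec.encode (α := β)
    exact .exists_snd (.and (by fun_prop)
      (hP.comp (f := fun w : (α × ℕ) × β => (w.1.1, w.2)) (by fun_prop)))
  have h : IsSigma2 fun x => ∀ n < f x + 1,
      (¬ ∃ y ∈ (Encodable.decode n : Option β), Encodable.encode y = n) ∨
        ∃ y : β, Encodable.encode y = n ∧ P x y :=
    .forall_lt (by fun_prop) (.or (.of_primrecPred hcode) hval)
  refine h.of_iff fun x => ⟨fun hx n hn => or_iff_not_imp_left.2 fun hy => ?_, fun hx y hy => ?_⟩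
  · obtain ⟨y, -, rfl⟩ := not_not.1 hy
    exact ⟨y, rfl, hx y (by omega)⟩
  · rcases hx _ (Nat.lt_succ_of_le hy) with hno | ⟨y', hy', hP'⟩
    · exact absurd ⟨y, Encodable.encodek y, rfl⟩ hno
    · rwa [← Encodable.encode_injective hy']

/-- A Martin-Löf test relative to the halting problem, given by a `Σ₂` family of sets of dyadic
intervals. -/
structure IsDyadicTest (D : ℕ → ℕ × ℕ × ℕ → Prop) : Prop where
  isSigma2 : IsSigma2 fun z : ℕ × ℕ × ℕ × ℕ => D z.1 z.2
  sum_le : ∀ i (F : Finset (ℕ × ℕ × ℕ)), (∀ I ∈ F, D i I) →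
    ∑ I ∈ F, dyadicLength I ≤ (2 : ℝ)⁻¹ ^ i

/-- Randomness with respect to the tests `IsDyadicTest`. -/
def IsDyadicRandom (β : ℝ) : Prop := ∀ D, IsDyadicTest D → ∃ i, ∀ I, D i I → β ∉ dyadicIoo I

/-- Convergence of the program with number `e`. As the `Π₁` relations are the complements of the
relations `Halts e i`, the `Σ₂` families are the families `∃ k, ¬ Halts e i (I, k)`. -/
def Halts (e i : ℕ) (w : (ℕ × ℕ × ℕ) × ℕ) : Prop :=
  ((Denumerable.ofNat Nat.Partrec.Code e).eval (Encodable.encode (i, w))).Dom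

@[fun_prop]
theorem isSigma1_halts {α : Type*} [Primcodable α] {e i : α → ℕ} {w : α → (ℕ × ℕ × ℕ) × ℕ}
    (he : Primrec e) (hi : Primrec i) (hw : Primrec w) :
    IsSigma1 fun x => Halts (e x) (i x) (w x) :=
  isSigma1_eval_dom.comp (f := fun x =>
      (Denumerable.ofNat Nat.Partrec.Code (e x), Encodable.encode (i x, w x)))
    (((Primrec.ofNat _).comp he).pair (Primrec.encode.comp (hi.pair hw)))

theorem IsDyadicTest.exists_iff_not_halts {D : ℕ → ℕ × ℕ × ℕ → Prop} (hD : IsDyadicTest D) :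
    ∃ e, ∀ i I, D i I ↔ ∃ k, ¬ Halts e i (I, k) := by
  obtain ⟨R, hR, hDR⟩ := hD.isSigma2
  have h : IsSigma1 fun n => ∃ j, ∃ v ∈ (Encodable.decode n : Option (ℕ × (ℕ × ℕ × ℕ) × ℕ)),
      ¬ R (((v.1, v.2.1), v.2.2), j) := by
    have := Primrec.decode (α := ℕ × (ℕ × ℕ × ℕ) × ℕ)
    fun_prop
  obtain ⟨c, hc⟩ := exists_code_dom_iff_of_isSigma1 h
  refine ⟨Encodable.encode c, fun i I => (hDR (i, I)).trans (exists_congr fun k => ?_)⟩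
  rw [Halts, Denumerable.ofNat_encode, hc]
  simp only [Encodable.encodek, Option.mem_some_iff, exists_eq_left', not_exists, not_not]

/-- The `e`-th component of the universal test lists the members of the `e + 2`-nd component of the
`e`-th `Σ₂` family. It lists `I`, with witness `k`, as long as the intervals that have been
enumerated up to the code of `(I, k)` have total length at most `2⁻¹ ^ (e + 2)`. -/
def UniversalTestAt (e : ℕ) (w : (ℕ × ℕ × ℕ) × ℕ) : Prop :=
  ¬ Halts e (e + 2) w ∧ ∃ Z : List (ℕ × ℕ × ℕ), (Z.map dyadicLength).sum ≤ (2 : ℝ)⁻¹ ^ (e + 2) ∧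
    ∀ v, Encodable.encode v ≤ Encodable.encode w → v.1 ∈ Z ∨ Halts e (e + 2) v

/-- The intervals of the universal test. -/
def universalIntervals : Set (ℕ × ℕ × ℕ) := {I | ∃ e k, UniversalTestAt e (I, k)}

theorem isSigma2_mem_universalIntervals : IsSigma2 fun I => I ∈ universalIntervals := by
  have hmem : PrimrecPred fun z : (ℕ × ℕ × ℕ) × List (ℕ × ℕ × ℕ) => z.1 ∈ z.2 := by
    have h : PrimrecPred fun z : (ℕ × ℕ × ℕ) × List (ℕ × ℕ × ℕ) => ∃ I ∈ z.2, I = z.1 := by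
      fun_prop
    exact h.of_eq fun z => by simp
  have hcover : IsSigma2 fun z : (((ℕ × ℕ × ℕ) × ℕ) × ℕ) × List (ℕ × ℕ × ℕ) =>
      ∀ v, Encodable.encode v ≤ Encodable.encode (z.1.1.1, z.1.2) →
        v.1 ∈ z.2 ∨ Halts z.1.1.2 (z.1.1.2 + 2) v := by
    have := Primrec.encode (α := (ℕ × ℕ × ℕ) × ℕ)
    refine .forall_encode_le (by fun_prop) (.or (.of_primrecPred ?_) (by fun_prop))
    exact hmem.comp (f := fun w : ((((ℕ × ℕ × ℕ) × ℕ) × ℕ) × List (ℕ × ℕ × ℕ)) × (ℕ × ℕ × ℕ) × ℕ =>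
      (w.2.1, w.1.2)) (by fun_prop)
  have h : IsSigma2 fun I => ∃ e k, UniversalTestAt e (I, k) :=
    .exists_snd (.exists_snd (.and (by fun_prop) (.exists_snd (.and
      (.of_primrecPred (by fun_prop)) hcover))))
  exact h

theorem sum_dyadicLength_toFinset_le (Z : List (ℕ × ℕ × ℕ)) :
    ∑ I ∈ Z.toFinset, dyadicLength I ≤ (Z.map dyadicLength).sum := by
  have hdedup : Z.toFinset = Z.dedup.toFinset := by
    ext
    simp
  rw [hdedup, List.sum_toFinset _ Z.nodup_dedup]
  refine (Z.dedup_sublist.map dyadicLength).sum_le_sum fun x hx => ?_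
  obtain ⟨I, -, rfl⟩ := List.mem_map.1 hx
  exact dyadicLength_nonneg I

theorem sum_dyadicLength_universalTestAt_le {e : ℕ} {F : Finset (ℕ × ℕ × ℕ)}
    (hF : ∀ I ∈ F, ∃ k, UniversalTestAt e (I, k)) :
    ∑ I ∈ F, dyadicLength I ≤ (2 : ℝ)⁻¹ ^ (e + 2) := by
  rcases F.eq_empty_or_nonempty with rfl | hne
  · simp
  choose! k hk using hF
  obtain ⟨J, hJ, hmax⟩ := F.exists_max_image (fun I => Encodable.encode (I, k I)) hne
  obtain ⟨-, Z, hZ, hcover⟩ := hk J hJ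
  have hFZ : F ⊆ Z.toFinset := fun I hI =>
    List.mem_toFinset.2 ((hcover (I, k I) (hmax I hI)).resolve_right (hk I hI).1)
  calc ∑ I ∈ F, dyadicLength I
      ≤ ∑ I ∈ Z.toFinset, dyadicLength I :=
        Finset.sum_le_sum_of_subset_of_nonneg hFZ fun I _ _ => dyadicLength_nonneg I
    _ ≤ (Z.map dyadicLength).sum := sum_dyadicLength_toFinset_le Z
    _ ≤ (2 : ℝ)⁻¹ ^ (e + 2) := hZ

theorem volume_universalIntervals_le :
    volume (⋃ I ∈ universalIntervals, dyadicIoo I) ≤ ENNReal.ofReal (1 / 2) := by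
  have hunion : ⋃ I ∈ universalIntervals, dyadicIoo I =
      ⋃ e, ⋃ I ∈ {I | ∃ k, UniversalTestAt e (I, k)}, dyadicIoo I := by
    ext x
    simp only [universalIntervals, Set.mem_iUnion, Set.mem_ofPred_eq, exists_prop]
    tauto
  have hsum : HasSum (fun e : ℕ => (2 : ℝ)⁻¹ ^ (e + 2)) (1 / 2) := by
    have := (hasSum_geometric_of_lt_one (r := (2 : ℝ)⁻¹) (by norm_num) (by norm_num)).mul_right
      ((2 : ℝ)⁻¹ ^ 2)
    simp only [← pow_add] at this
    rwa [show (1 - (2 : ℝ)⁻¹)⁻¹ * 2⁻¹ ^ 2 = 1 / 2 by norm_num] at this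
  calc volume (⋃ I ∈ universalIntervals, dyadicIoo I)
      ≤ ∑' e, volume (⋃ I ∈ {I | ∃ k, UniversalTestAt e (I, k)}, dyadicIoo I) :=
        hunion ▸ measure_iUnion_le _
    _ ≤ ∑' e : ℕ, ENNReal.ofReal ((2 : ℝ)⁻¹ ^ (e + 2)) :=
        ENNReal.tsum_le_tsum fun e =>
          volume_biUnion_dyadicIoo_le fun _ => sum_dyadicLength_universalTestAt_le
    _ = ENNReal.ofReal (1 / 2) := by
        rw [← ENNReal.ofReal_tsum_of_nonneg (fun e => by positivity) hsum.summable, hsum.tsum_eq]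

theorem IsDyadicTest.mem_universalIntervals {D : ℕ → ℕ × ℕ × ℕ → Prop} (hD : IsDyadicTest D)
    {e : ℕ} (he : ∀ i I, D i I ↔ ∃ k, ¬ Halts e i (I, k)) {I : ℕ × ℕ × ℕ} (hI : D (e + 2) I) :
    I ∈ universalIntervals := by
  obtain ⟨k, hk⟩ := (he _ _).1 hI
  have hfin : {v : (ℕ × ℕ × ℕ) × ℕ | Encodable.encode v ≤ Encodable.encode (I, k)}.Finite :=
    (Set.finite_Iic _).preimage Encodable.encode_injective.injOn
  let F := (hfin.toFinset.filter fun v => ¬ Halts e (e + 2) v).image Prod.fst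
  have hF : ∀ J ∈ F, D (e + 2) J := fun J hJ => by
    obtain ⟨v, hv, rfl⟩ := Finset.mem_image.1 hJ
    exact (he _ _).2 ⟨v.2, (Finset.mem_filter.1 hv).2⟩
  refine ⟨e, k, hk, F.toList, ?_, fun v hv => or_iff_not_imp_right.2 fun hvh => ?_⟩
  · rw [Finset.sum_map_toList]
    exact hD.sum_le _ F hF
  · exact Finset.mem_toList.2
      (Finset.mem_image_of_mem _ (Finset.mem_filter.2 ⟨hfin.mem_toFinset.2 hv, hvh⟩))

theorem isDyadicRandom_of_notMem {β : ℝ} (hβ : β ∉ ⋃ I ∈ universalIntervals, dyadicIoo I) :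
    IsDyadicRandom β := by
  intro D hD
  obtain ⟨e, he⟩ := hD.exists_iff_not_halts
  exact ⟨e + 2, fun I hI hmem => hβ (Set.mem_biUnion (hD.mem_universalIntervals he hI) hmem)⟩

end UniversalTest

section LargestRandom

theorem exists_largest_notMem {G : Set ℝ} (hG : IsOpen G)
    (hvol : volume G ≤ ENNReal.ofReal (1 / 2)) :
    ∃ β, 1 / 2 ≤ β ∧ β ≤ 1 ∧ β ∉ G ∧ Set.Ioc β 1 ⊆ G := by
  have hne : (Set.Icc (0 : ℝ) 1 \ G).Nonempty := by
    rw [Set.sdiff_nonempty]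
    intro hsub
    have := (measure_mono hsub).trans hvol
    rw [Real.volume_Icc, ENNReal.ofReal_le_ofReal_iff (by norm_num)] at this
    norm_num at this
  obtain ⟨β, ⟨hβ01, hβG⟩, hmax⟩ := (isCompact_Icc.diff hG).exists_isGreatest hne
  have hsub : Set.Ioc β 1 ⊆ G := fun x hx => by
    by_contra hxG
    exact (hmax ⟨⟨hβ01.1.trans hx.1.le, hx.2⟩, hxG⟩).not_gt hx.1
  refine ⟨β, ?_, hβ01.2, hβG, hsub⟩
  have := (measure_mono hsub).trans hvol
  rw [Real.volume_Ioc, ENNReal.ofReal_le_ofReal_iff (by norm_num)] at this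
  linarith

theorem exists_forall_Icc_subset {ι : Type*} {c : ι → Set ℝ} (hc : ∀ i, IsOpen (c i)) {y : ℝ}
    (hy : Set.Icc y 1 ⊆ ⋃ i, c i) :
    ∃ t : ℕ, ∀ j : ℕ, j < 2 ^ t → ((j : ℝ) + 1) / 2 ^ t < y ∨
      ∃ i, Set.Icc ((j : ℝ) / 2 ^ t) ((j + 1) / 2 ^ t) ⊆ c i := by
  obtain ⟨δ, hδ, hball⟩ := lebesgue_number_lemma_of_metric isCompact_Icc hc hy
  obtain ⟨t, ht⟩ := exists_pow_lt_of_lt_one hδ (one_half_lt_one (α := ℝ))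
  rw [one_div_pow] at ht
  refine ⟨t, fun j hj => or_iff_not_imp_left.2 fun hjy => ?_⟩
  have hj1 : ((j : ℝ) + 1) / 2 ^ t ≤ 1 := by
    rw [div_le_one (by positivity)]
    exact_mod_cast Nat.succ_le_of_lt hj
  obtain ⟨i, hi⟩ := hball _ ⟨not_lt.1 hjy, hj1⟩
  refine ⟨i, fun x hx => hi ?_⟩
  rw [Metric.mem_ball, Real.dist_eq, abs_sub_comm, abs_of_nonneg (sub_nonneg.2 hx.2)]
  have := hx.1
  rw [add_div] at *
  linarith

theorem exists_mem_Icc_dyadic {x : ℝ} (hx : x ∈ Set.Icc 0 1) (t : ℕ) :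
    ∃ j : ℕ, j < 2 ^ t ∧ x ∈ Set.Icc ((j : ℝ) / 2 ^ t) ((j + 1) / 2 ^ t) := by
  rcases hx.2.lt_or_eq with hlt | rfl
  · exact ⟨_, floor_mul_two_pow_lt ⟨hx.1, hlt⟩ t,
      Set.Ico_subset_Icc_self ((floor_mul_two_pow_eq_iff hx.1).1 rfl)⟩
  · refine ⟨2 ^ t - 1, Nat.sub_lt (by positivity) one_pos, ?_⟩
    rw [Nat.cast_sub Nat.one_le_two_pow, Set.mem_Icc, div_le_one (by positivity),
      le_div_iff₀ (by positivity)]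
    simp

theorem hasSigma2RightCut_of_Ioc_subset {S : Set (ℕ × ℕ × ℕ)} (hS : IsSigma2 fun I => I ∈ S)
    {β : ℝ} (hβ : β ∈ Set.Icc 0 1) (hnot : β ∉ ⋃ I ∈ S, dyadicIoo I)
    (hsub : Set.Ioc β 1 ⊆ ⋃ I ∈ S, dyadicIoo I) : HasSigma2RightCut β := by
  have h : IsSigma2 fun z : ℕ × ℕ => ∃ t, ∀ j < 2 ^ t, (j + 1) * 2 ^ z.2 < z.1 * 2 ^ t ∨
      ∃ I, I ∈ S ∧ I.1 * 2 ^ t < j * 2 ^ I.2.2 ∧ (j + 1) * 2 ^ I.2.2 < I.2.1 * 2 ^ t :=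
    .exists_snd (.forall_lt (by fun_prop) (.or (by fun_prop)
      (.exists_snd ((hS.comp (f := Prod.snd) (by fun_prop)).and (by fun_prop)))))
  refine h.of_iff fun ⟨a, s⟩ => ?_
  have hlt_iff (t j : ℕ) :
      (j + 1) * 2 ^ s < a * 2 ^ t ↔ ((j : ℝ) + 1) / 2 ^ t < (a : ℝ) / 2 ^ s := by
    rw [div_lt_div_iff₀ (by positivity) (by positivity)]
    norm_cast
  simp only [hlt_iff, ← Icc_subset_dyadicIoo_iff]
  constructor
  · intro hβa
    have hcover : Set.Icc ((a : ℝ) / 2 ^ s) 1 ⊆ ⋃ I : S, dyadicIoo I := by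
      rw [← Set.biUnion_eq_iUnion S fun I _ => dyadicIoo I]
      exact fun x hx => hsub ⟨hβa.trans_le hx.1, hx.2⟩
    obtain ⟨t, ht⟩ := exists_forall_Icc_subset (fun _ => isOpen_Ioo) hcover
    exact ⟨t, fun j hj => (ht j hj).imp_right fun ⟨I, hI⟩ => ⟨I, I.2, hI⟩⟩
  · rintro ⟨t, ht⟩
    obtain ⟨j, hj, hjβ⟩ := exists_mem_Icc_dyadic hβ t
    rcases ht j hj with hja | ⟨I, hIS, hI⟩
    · exact hjβ.2.trans_lt hja
    · exact absurd (Set.mem_biUnion hIS (hI hjβ)) hnot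

theorem exists_isDyadicRandom :
    ∃ β : ℝ, 1 / 2 ≤ β ∧ β ≤ 1 ∧ HasSigma2RightCut β ∧ IsDyadicRandom β := by
  have hopen : IsOpen (⋃ I ∈ universalIntervals, dyadicIoo I) :=
    isOpen_biUnion fun _ _ => isOpen_Ioo
  obtain ⟨β, hhalf, h1, hnot, hsub⟩ := exists_largest_notMem hopen volume_universalIntervals_le
  exact ⟨β, hhalf, h1, hasSigma2RightCut_of_Ioc_subset isSigma2_mem_universalIntervals
    ⟨by linarith, h1⟩ hnot hsub, isDyadicRandom_of_notMem hnot⟩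

end LargestRandom

/-! ### Randomness of sums `β / 2 ^ c + γ` -/

section MinimalCells

/-- `A s k` selects the dyadic cell `[k / 2 ^ s, (k + 1) / 2 ^ s)`, and none of the larger dyadic
cells that contain it. -/
def IsMinimalCell (A : ℕ → ℕ → Prop) (s k : ℕ) : Prop := A s k ∧ ∀ t < s, ¬ A t (k / 2 ^ (s - t))

variable {A : ℕ → ℕ → Prop}

theorem floor_mul_two_pow_div (x : ℝ) {t s : ℕ} (h : t ≤ s) :
    ⌊x * 2 ^ s⌋₊ / 2 ^ (s - t) = ⌊x * 2 ^ t⌋₊ := by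
  have hx : x * 2 ^ t = x * 2 ^ s / ((2 ^ (s - t) : ℕ) : ℝ) := by
    push_cast
    rw [pow_sub₀ _ two_ne_zero h]
    field_simp
  rw [hx, Nat.floor_div_natCast]

theorem exists_isMinimalCell {x : ℝ} (hx : 0 ≤ x) (h : ∃ s, A s ⌊x * 2 ^ s⌋₊) :
    ∃ s k : ℕ, IsMinimalCell A s k ∧ x ∈ Set.Ico ((k : ℝ) / 2 ^ s) ((k + 1) / 2 ^ s) := by
  refine ⟨Nat.find h, _, ⟨Nat.find_spec h, fun t ht => ?_⟩, (floor_mul_two_pow_eq_iff hx).1 rfl⟩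
  rw [floor_mul_two_pow_div x ht.le]
  exact Nat.find_min h ht

theorem IsMinimalCell.eq_of_le {s k s' k' : ℕ} {x : ℝ} (h : A s k) (h' : IsMinimalCell A s' k')
    (hss' : s ≤ s') (hx : x ∈ Set.Ico ((k : ℝ) / 2 ^ s) ((k + 1) / 2 ^ s))
    (hx' : x ∈ Set.Ico ((k' : ℝ) / 2 ^ s') ((k' + 1) / 2 ^ s')) : (s, k) = (s', k') := by
  have h0 : 0 ≤ x := le_trans (by positivity) hx.1
  obtain rfl := (floor_mul_two_pow_eq_iff h0).2 hx
  obtain rfl := (floor_mul_two_pow_eq_iff h0).2 hx'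
  rcases hss'.lt_or_eq with hlt | rfl
  · refine absurd h ?_
    rw [← floor_mul_two_pow_div x hss']
    exact h'.2 s hlt
  · rfl

theorem pairwiseDisjoint_isMinimalCell : {z : ℕ × ℕ | IsMinimalCell A z.1 z.2}.PairwiseDisjoint
    fun z => Set.Ico ((z.2 : ℝ) / 2 ^ z.1) ((z.2 + 1) / 2 ^ z.1) := by
  intro z hz z' hz' hne
  refine Set.disjoint_left.2 fun x hx hx' => hne ?_
  rcases le_total z.1 z'.1 with h | h
  · exact hz'.eq_of_le hz.1 h hx hx'
  · exact (hz.eq_of_le hz'.1 h hx' hx).symm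

theorem sum_le_of_isMinimalCell {G : Set ℝ} {c : ℝ} (hc : 0 ≤ c) (hG : volume G ≤ ENNReal.ofReal c)
    (hA : ∀ s k, A s k → Set.Ico ((k : ℝ) / 2 ^ s) ((k + 1) / 2 ^ s) ⊆ G) {F : Finset (ℕ × ℕ)}
    (hF : ∀ z ∈ F, IsMinimalCell A z.1 z.2) : ∑ z ∈ F, (1 : ℝ) / 2 ^ z.1 ≤ c := by
  rw [← ENNReal.ofReal_le_ofReal_iff hc, ENNReal.ofReal_sum_of_nonneg fun _ _ => by positivity]
  calc ∑ z ∈ F, ENNReal.ofReal (1 / 2 ^ z.1)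
      = ∑ z ∈ F, volume (Set.Ico ((z.2 : ℝ) / 2 ^ z.1) ((z.2 + 1) / 2 ^ z.1)) := by
        simp only [volume_Ico_dyadic]
    _ = volume (⋃ z ∈ F, Set.Ico ((z.2 : ℝ) / 2 ^ z.1) ((z.2 + 1) / 2 ^ z.1)) :=
        (measure_biUnion_finset (pairwiseDisjoint_isMinimalCell.subset hF)
          fun _ _ => measurableSet_Ico).symm
    _ ≤ volume G := measure_mono (Set.iUnion₂_subset fun z hz => hA _ _ (hF z hz).1)
    _ ≤ ENNReal.ofReal c := hG

end MinimalCells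

section TestCells

/-- The closed dyadic cell `[k / 2 ^ s, (k + 1) / 2 ^ s]` lies in the open rational interval with
code `w`. -/
def CellInInterval (w s k : ℕ) : Prop :=
  (IsRatCode w.unpair.1 ∧ IsRatCode w.unpair.2) ∧
    RatCodeLT w.unpair.1 k s ∧ RatCodeGT w.unpair.2 (k + 1) s

@[fun_prop]
theorem primrecPred_cellInInterval {α : Type*} [Primcodable α] {w s k : α → ℕ} (hw : Primrec w)
    (hs : Primrec s) (hk : Primrec k) : PrimrecPred fun x => CellInInterval (w x) (s x) (k x) := by
  unfold CellInInterval
  fun_prop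

theorem cellInInterval_iff {w s k : ℕ} :
    CellInInterval w s k ↔ ∃ p q : ℚ, Encodable.encode (p, q) = w ∧
      (p : ℝ) < k / 2 ^ s ∧ ((k : ℝ) + 1) / 2 ^ s < q := by
  simp only [CellInInterval, isRatCode_iff]
  constructor
  · rintro ⟨⟨⟨p, hp⟩, q, hq⟩, hlt, hgt⟩
    rw [← hp, ratCodeLT_encode] at hlt
    rw [← hq, ratCodeGT_encode] at hgt
    exact ⟨p, q, by rw [Encodable.encode_prod_val, hp, hq, Nat.pair_unpair], hlt,
      by exact_mod_cast hgt⟩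
  · rintro ⟨p, q, rfl, hlt, hgt⟩
    simp only [Encodable.encode_prod_val, Nat.unpair_pair]
    exact ⟨⟨⟨p, rfl⟩, q, rfl⟩, (ratCodeLT_encode ..).2 hlt,
      (ratCodeGT_encode ..).2 (by exact_mod_cast hgt)⟩

/-- By stage `s` of the `Σ₂` enumeration given by `R`, the cell `[k / 2 ^ s, (k + 1) / 2 ^ s]` lies
in one of the intervals of the `i`-th component of the test. -/
def InTestByStage (R : (ℕ × ℕ) × ℕ → Prop) (i s k : ℕ) : Prop :=
  ∃ w < s + 1, ∃ l < s + 1, CellInInterval w s k ∧ ∀ j, R ((Nat.pair i w, l), j)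

variable {R : (ℕ × ℕ) × ℕ → Prop}

theorem isSigma2_inTestByStage (hR : PrimrecPred R) :
    IsSigma2 fun z : ℕ × ℕ × ℕ => InTestByStage R z.1 z.2.1 z.2.2 := by
  unfold InTestByStage
  fun_prop

theorem isSigma2_not_inTestByStage (hR : PrimrecPred R) :
    IsSigma2 fun z : ℕ × ℕ × ℕ => ¬ InTestByStage R z.1 z.2.1 z.2.2 := by
  have h : IsSigma2 fun z : ℕ × ℕ × ℕ => ∀ w < z.2.1 + 1, ∀ l < z.2.1 + 1,
      ¬ CellInInterval w z.2.1 z.2.2 ∨ ∃ j, ¬ R ((Nat.pair z.1 w, l), j) := by fun_prop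
  refine h.of_iff fun z => ?_
  simp only [InTestByStage, not_exists, not_and, not_forall, imp_iff_not_or]

theorem isSigma2_isMinimalCell_inTestByStage (hR : PrimrecPred R) : IsSigma2 fun z : ℕ × ℕ × ℕ =>
    IsMinimalCell (InTestByStage R z.1) z.2.1 z.2.2 :=
  (isSigma2_inTestByStage hR).and (.forall_lt (by fun_prop)
    ((isSigma2_not_inTestByStage hR).comp
      (f := fun z : (ℕ × ℕ × ℕ) × ℕ => (z.1.1, z.2, z.1.2.2 / 2 ^ (z.1.2.1 - z.2))) (by fun_prop)))

variable {W : Set ℕ} (hWR : ∀ m, m ∈ W ↔ ∃ l, ∀ j, R ((m, l), j))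
include hWR

theorem InTestByStage.subset_testSet {i s k : ℕ} (h : InTestByStage R i s k) :
    Set.Ico ((k : ℝ) / 2 ^ s) ((k + 1) / 2 ^ s) ⊆ testSet W i := by
  obtain ⟨w, -, l, -, hw, hR⟩ := h
  obtain ⟨p, q, rfl, hp, hq⟩ := cellInInterval_iff.1 hw
  exact fun x hx => ⟨p, q, (hWR _).2 ⟨l, hR⟩, hp.trans_le hx.1, hx.2.trans hq⟩

theorem exists_inTestByStage {i : ℕ} {x : ℝ} (h0 : 0 ≤ x) (hx : x ∈ testSet W i) :
    ∃ s, InTestByStage R i s ⌊x * 2 ^ s⌋₊ := by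
  obtain ⟨p, q, hpq, hp, hq⟩ := hx
  obtain ⟨l, hl⟩ := (hWR _).1 hpq
  obtain ⟨t, ht⟩ := exists_pow_lt_of_lt_one (lt_min (sub_pos.2 hp) (sub_pos.2 hq))
    (one_half_lt_one (α := ℝ))
  set s := max t (max l (Encodable.encode (p, q)))
  have hst : (1 / 2 : ℝ) ^ s ≤ (1 / 2) ^ t :=
    pow_le_pow_of_le_one (by norm_num) (by norm_num) (le_max_left _ _)
  refine ⟨s, Encodable.encode (p, q), by omega, l, by omega,
    cellInInterval_iff.2 ⟨p, q, rfl, ?_⟩, hl⟩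
  have hxs := (floor_mul_two_pow_eq_iff h0 (t := s)).1 rfl
  rw [lt_min_iff] at ht
  rw [Set.mem_Ico, add_div] at hxs
  rw [add_div]
  rw [one_div_pow] at hst
  exact ⟨by linarith, by linarith⟩

end TestCells

section Transfer

theorem HasSigma2Graph.isSigma2_comp {α : Type*} [Primcodable α] {b : ℕ → ℕ}
    (hb : HasSigma2Graph b) {P : α → ℕ → Prop} (hP : IsSigma2 fun z : α × ℕ => P z.1 z.2)
    {f : α → ℕ} (hf : Primrec f) : IsSigma2 fun x => P x (b (f x)) := by
  have hgraph := hb.comp (f := fun z : α × ℕ => (f z.1, z.2)) (by fun_prop)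
  have h : IsSigma2 fun x => ∃ u, u = b (f x) ∧ P x u := .exists_snd (hgraph.and hP)
  exact h.of_iff fun x => exists_eq_left.symm

/-- The number `(u / 2 ^ n) / 2 ^ c + v / 2 ^ n` is at most the right endpoint of the cell
`[k / 2 ^ s, (k + 1) / 2 ^ s)`, stated without division. -/
def FitsCell (c s k n u v : ℕ) : Prop := (u + 2 ^ c * v) * 2 ^ s ≤ (k + 1) * 2 ^ (n + c)

/-- The interval from `2 ^ c * (k / 2 ^ s - v / 2 ^ n)` to `u / 2 ^ n`. It contains `β` if
`k / 2 ^ s ≤ β / 2 ^ c + γ`, `β < u / 2 ^ n` and `γ < v / 2 ^ n`. -/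
def pulledBackInterval (c s k n u v : ℕ) : ℕ × ℕ × ℕ :=
  (2 ^ c * (k * 2 ^ n - v * 2 ^ s), u * 2 ^ s, n + s)

theorem fitsCell_iff {c s k n u v : ℕ} : FitsCell c s k n u v ↔
    (u : ℝ) / 2 ^ n / 2 ^ c + (v : ℝ) / 2 ^ n ≤ ((k : ℝ) + 1) / 2 ^ s := by
  have hsum : (u : ℝ) / 2 ^ n / 2 ^ c + (v : ℝ) / 2 ^ n = (u + 2 ^ c * v) / 2 ^ (n + c) := by
    rw [pow_add]
    field_simp
  rw [hsum, div_le_div_iff₀ (by positivity) (by positivity), FitsCell]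
  norm_cast

theorem dyadicLength_pulledBackInterval_le {c s k n u v : ℕ} (h : FitsCell c s k n u v) :
    dyadicLength (pulledBackInterval c s k n u v) ≤ 2 ^ c * (1 / 2 ^ s) := by
  have hnat : u * 2 ^ s - 2 ^ c * (k * 2 ^ n - v * 2 ^ s) ≤ 2 ^ c * 2 ^ n := by
    have hfit : u * 2 ^ s + 2 ^ c * (v * 2 ^ s) ≤ 2 ^ c * (k * 2 ^ n) + 2 ^ c * 2 ^ n := by
      unfold FitsCell at h
      convert h using 1 <;> ring
    rw [Nat.mul_sub]
    omega
  rw [dyadicLength, pulledBackInterval, div_le_iff₀ (by positivity), pow_add]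
  calc ((u * 2 ^ s - 2 ^ c * (k * 2 ^ n - v * 2 ^ s) : ℕ) : ℝ)
      ≤ 2 ^ c * 2 ^ n := by exact_mod_cast hnat
    _ = 2 ^ c * (1 / 2 ^ s) * (2 ^ n * 2 ^ s) := by field_simp

theorem mem_dyadicIoo_pulledBackInterval {β γ : ℝ} (hβ : 0 < β) {c s k n u v : ℕ}
    (hu : β < u / 2 ^ n) (hv : γ < v / 2 ^ n) (hk : (k : ℝ) / 2 ^ s ≤ β / 2 ^ c + γ) :
    β ∈ dyadicIoo (pulledBackInterval c s k n u v) := by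
  rw [dyadicIoo, pulledBackInterval, Set.mem_Ioo, div_lt_iff₀ (by positivity),
    lt_div_iff₀ (by positivity), pow_add]
  rw [lt_div_iff₀ (by positivity)] at hu hv
  constructor
  · rcases le_total (v * 2 ^ s) (k * 2 ^ n) with hle | hle
    · push_cast [hle]
      rw [div_add' _ _ _ (by positivity), div_le_div_iff₀ (by positivity) (by positivity)] at hk
      have hk' := mul_le_mul_of_nonneg_right hk (by positivity : (0 : ℝ) ≤ 2 ^ n)
      have hv' := mul_lt_mul_of_pos_left hv (by positivity : (0 : ℝ) < 2 ^ c * 2 ^ s)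
      linarith
    · rw [Nat.sub_eq_zero_of_le hle, mul_zero, Nat.cast_zero]
      positivity
  · push_cast
    rw [← mul_assoc]
    gcongr

variable {β γ : ℝ} {b g : ℕ → ℕ} {D : ℕ → ℕ → ℕ → Prop} {c : ℕ}

/-- The `i`-th component of the test for `β` obtained from the cells `D` covering
`β / 2 ^ c + γ`: a cell is pulled back once the approximations to `β` and `γ` fit in. -/
def PulledBackTest (b g : ℕ → ℕ) (D : ℕ → ℕ → ℕ → Prop) (c i : ℕ) (I : ℕ × ℕ × ℕ) : Prop :=
  ∃ s k n, D (i + c) s k ∧ FitsCell c s k n (b n) (g n) ∧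
    (∀ m < n, ¬ FitsCell c s k m (b m) (g m)) ∧ I = pulledBackInterval c s k n (b n) (g n)

theorem isSigma2_pulledBackTest (hb : HasSigma2Graph b) (hg : HasSigma2Graph g)
    (hD : IsSigma2 fun z : ℕ × ℕ × ℕ => D z.1 z.2.1 z.2.2) :
    IsSigma2 fun z : ℕ × ℕ × ℕ × ℕ => PulledBackTest b g D c z.1 z.2 := by
  have hcomp {α : Type} [Primcodable α] {n : α → ℕ} (hn : Primrec n) {P : α → ℕ → ℕ → Prop}
      (hP : PrimrecPred fun z : (α × ℕ) × ℕ => P z.1.1 z.1.2 z.2) :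
      IsSigma2 fun x => P x (b (n x)) (g (n x)) :=
    hb.isSigma2_comp (P := fun x u => P x u (g (n x)))
      (hg.isSigma2_comp (P := fun z : α × ℕ => P z.1 z.2) (f := fun z => n z.1)
        (.of_primrecPred hP) (by fun_prop)) hn
  unfold PulledBackTest FitsCell pulledBackInterval
  refine .exists_snd (.exists_snd (.exists_snd (.and ?_ (.and ?_ (.and (.forall_lt ?_ ?_) ?_)))))
  · exact hD.comp (f := fun z : (((ℕ × ℕ × ℕ × ℕ) × ℕ) × ℕ) × ℕ => (z.1.1.1.1 + c, z.1.1.2, z.1.2))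
      (by fun_prop)
  · exact hcomp (n := fun z : (((ℕ × ℕ × ℕ × ℕ) × ℕ) × ℕ) × ℕ => z.2) (P := fun z u v =>
      (u + 2 ^ c * v) * 2 ^ z.1.1.2 ≤ (z.1.2 + 1) * 2 ^ (z.2 + c)) (by fun_prop) (by fun_prop)
  · fun_prop
  · exact hcomp (n := fun z : ((((ℕ × ℕ × ℕ × ℕ) × ℕ) × ℕ) × ℕ) × ℕ => z.2) (P := fun z u v =>
      ¬ (u + 2 ^ c * v) * 2 ^ z.1.1.1.2 ≤ (z.1.1.2 + 1) * 2 ^ (z.2 + c)) (by fun_prop) (by fun_prop)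
  · exact hcomp (n := fun z : (((ℕ × ℕ × ℕ × ℕ) × ℕ) × ℕ) × ℕ => z.2)
      (P := fun z u v => z.1.1.1.2 =
      (2 ^ c * (z.1.2 * 2 ^ z.2 - v * 2 ^ z.1.1.2), u * 2 ^ z.1.1.2, z.2 + z.1.1.2))
      (by fun_prop) (by fun_prop)

theorem sum_dyadicLength_pulledBackTest_le {i : ℕ} {δ : ℝ}
    (hD : ∀ F : Finset (ℕ × ℕ), (∀ z ∈ F, D (i + c) z.1 z.2) → ∑ z ∈ F, (1 : ℝ) / 2 ^ z.1 ≤ δ)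
    {F : Finset (ℕ × ℕ × ℕ)} (hF : ∀ I ∈ F, PulledBackTest b g D c i I) :
    ∑ I ∈ F, dyadicLength I ≤ 2 ^ c * δ := by
  choose! s k n hcell hfit hmin hI using hF
  have hinj : Set.InjOn (fun I => (s I, k I)) (F : Set (ℕ × ℕ × ℕ)) := by
    intro I hIF J hJF hIJ
    obtain ⟨hs, hk⟩ := Prod.mk.inj hIJ
    have hn : n I = n J := by
      refine le_antisymm (not_lt.1 fun hlt => hmin I hIF _ hlt ?_)
        (not_lt.1 fun hlt => hmin J hJF _ hlt ?_)
      · rw [hs, hk]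
        exact hfit J hJF
      · rw [← hs, ← hk]
        exact hfit I hIF
    rw [hI I hIF, hI J hJF, hs, hk, hn]
  have hcells : ∀ z ∈ F.image fun I => (s I, k I), D (i + c) z.1 z.2 := fun z hz => by
    obtain ⟨I, hIF, rfl⟩ := Finset.mem_image.1 hz
    exact hcell I hIF
  calc ∑ I ∈ F, dyadicLength I
      ≤ ∑ I ∈ F, 2 ^ c * ((1 : ℝ) / 2 ^ s I) := Finset.sum_le_sum fun I hIF => by
        conv_lhs => rw [hI I hIF]
        exact dyadicLength_pulledBackInterval_le (hfit I hIF)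
    _ = 2 ^ c * ∑ z ∈ F.image fun I => (s I, k I), (1 : ℝ) / 2 ^ z.1 := by
        rw [Finset.sum_image hinj, Finset.mul_sum]
    _ ≤ 2 ^ c * δ := by
        gcongr
        exact hD _ hcells

theorem exists_fitsCell (hb : IsUpperApprox β b) (hg : IsUpperApprox γ g) {s k : ℕ}
    (h : β / 2 ^ c + γ < ((k : ℝ) + 1) / 2 ^ s) : ∃ n, FitsCell c s k n (b n) (g n) := by
  set δ := ((k : ℝ) + 1) / 2 ^ s - (β / 2 ^ c + γ) with hδ
  have hδ0 : 0 < δ := sub_pos.2 h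
  obtain ⟨n₁, hn₁⟩ := hb.exists_lt (β + δ / 2) (by linarith)
  obtain ⟨n₂, hn₂⟩ := hg.exists_lt (γ + δ / 2) (by linarith)
  refine ⟨max n₁ n₂, fitsCell_iff.2 ?_⟩
  calc (b (max n₁ n₂) : ℝ) / 2 ^ max n₁ n₂ / 2 ^ c + (g (max n₁ n₂) : ℝ) / 2 ^ max n₁ n₂
      ≤ (β + δ / 2) / 2 ^ c + (γ + δ / 2) := by
        gcongr
        · exact (hb.antitone (le_max_left n₁ n₂)).trans hn₁.le
        · exact (hg.antitone (le_max_right n₁ n₂)).trans hn₂.le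
    _ ≤ (β / 2 ^ c + δ / 2) + (γ + δ / 2) := by
        have := div_le_self (half_pos hδ0).le (one_le_pow₀ one_le_two : (1 : ℝ) ≤ 2 ^ c)
        rw [add_div]
        linarith
    _ = ((k : ℝ) + 1) / 2 ^ s := by
        rw [hδ]
        ring

theorem exists_pulledBackTest (hβ : 0 < β) (hb : IsUpperApprox β b) (hg : IsUpperApprox γ g)
    {i s k : ℕ} (hD : D (i + c) s k)
    (h : β / 2 ^ c + γ ∈ Set.Ico ((k : ℝ) / 2 ^ s) ((k + 1) / 2 ^ s)) :
    ∃ I, PulledBackTest b g D c i I ∧ β ∈ dyadicIoo I := by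
  have hfit := exists_fitsCell hb hg h.2
  exact ⟨_, ⟨s, k, Nat.find hfit, hD, Nat.find_spec hfit, fun _ => Nat.find_min hfit, rfl⟩,
    mem_dyadicIoo_pulledBackInterval hβ (hb.lt _) (hg.lt _) h.1⟩

theorem IsDyadicRandom.mlRandomIn_div_two_pow_add (hrand : IsDyadicRandom β) (hβ0 : 0 < β)
    (hβ1 : β ≤ 1) (hβ : HasSigma2RightCut β) (hγ0 : 0 ≤ γ) (hγ1 : γ ≤ 1)
    (hγ : HasSigma2RightCut γ) (c : ℕ) : MLRandomIn (iterJump 1) (β / 2 ^ c + γ) := by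
  intro W hW hvol
  obtain ⟨R, hR, hWR⟩ := isSigma2_of_ceIn hW
  obtain ⟨b, hb⟩ := exists_isUpperApprox hβ0.le (by linarith) hβ
  obtain ⟨g, hg⟩ := exists_isUpperApprox hγ0 (by linarith) hγ
  have hsum (i : ℕ) (F : Finset (ℕ × ℕ))
      (hF : ∀ z ∈ F, IsMinimalCell (InTestByStage R i) z.1 z.2) :
      ∑ z ∈ F, (1 : ℝ) / 2 ^ z.1 ≤ 2⁻¹ ^ i :=
    sum_le_of_isMinimalCell (by positivity) (hvol i)
      (fun _ _ => InTestByStage.subset_testSet hWR) hF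
  have htest : IsDyadicTest (PulledBackTest b g (fun i => IsMinimalCell (InTestByStage R i)) c) :=
    { isSigma2 := isSigma2_pulledBackTest hb.graph hg.graph
        (isSigma2_isMinimalCell_inTestByStage hR)
      sum_le := fun i F hF => (sum_dyadicLength_pulledBackTest_le (hsum (i + c)) hF).trans_eq (by
        rw [pow_add, inv_pow _ c]
        field_simp) }
  obtain ⟨i, hi⟩ := hrand _ htest
  refine ⟨i + c, fun hmem => ?_⟩
  have h0 : 0 ≤ β / 2 ^ c + γ := by positivity
  obtain ⟨s, k, hcell, hsk⟩ := exists_isMinimalCell h0 (exists_inTestByStage hWR h0 hmem)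
  obtain ⟨I, hI, hβI⟩ := exists_pulledBackTest
    (D := fun i => IsMinimalCell (InTestByStage R i)) hβ0 hb hg hcell hsk
  exact hi I hI hβI

end Transfer

/-! ### Universal machines -/

theorem UniversalMono.nRandom_two {U : MonoMachine} (hU : UniversalMono U) :
    NRandom 2 (muR (MonoINF U)) := by
  obtain ⟨β, hβ0, hβ1, hβ, hrand⟩ := exists_isDyadicRandom
  obtain ⟨V, hV⟩ := exists_muR_monoINF_eq (by linarith) hβ1 hβ
  obtain ⟨M, σ, -, hM, -, -, hU⟩ := hU
  obtain ⟨e, he⟩ := hM V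
  rw [muR_monoINF_eq_add (σ := σ e) (V := V) fun τ => by rw [hU, he], hV]
  exact hrand.mlRandomIn_div_two_pow_add (by linarith) hβ1 hβ (muR_monoINF_nonneg _)
    (muR_monoINF_le_one _) (hasSigma2RightCut_muR_monoINF _) _

section Enumeration

open Nat.Partrec (Code)

/-- The output of the `e`-th program on the string `σ` within `s` steps. -/
def stageOutput (e s : ℕ) (σ : List Bool) : Option (List Bool) :=
  ((Denumerable.ofNat Code e).evaln s (Encodable.encode σ)).bind fun m => Encodable.decode m

@[fun_prop]
theorem primrec_stageOutput {α : Type*} [Primcodable α] {e s : α → ℕ} {σ : α → List Bool}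
    (he : Primrec e) (hs : Primrec s) (hσ : Primrec σ) :
    Primrec fun x => stageOutput (e x) (s x) (σ x) :=
  Primrec.option_bind (primrec_evaln hs ((Primrec.ofNat Code).comp he) (by fun_prop))
    (Primrec.decode.comp Primrec.snd).to₂

theorem mem_stageOutput {e s : ℕ} {σ a : List Bool} : a ∈ stageOutput e s σ ↔
    ∃ m ∈ (Denumerable.ofNat Code e).evaln s (Encodable.encode σ), Encodable.decode m = some a :=
  Option.mem_bind_iff

theorem stageOutput_mono {e s t : ℕ} {σ a : List Bool} (h : s ≤ t) (ha : a ∈ stageOutput e s σ) :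
    a ∈ stageOutput e t σ := by
  obtain ⟨m, hm, hma⟩ := mem_stageOutput.1 ha
  exact mem_stageOutput.2 ⟨m, Code.evaln_mono h hm, hma⟩

theorem encode_lt_of_mem_stageOutput {e s : ℕ} {σ a : List Bool} (ha : a ∈ stageOutput e s σ) :
    Encodable.encode σ < s := by
  obtain ⟨m, hm, -⟩ := mem_stageOutput.1 ha
  exact Code.evaln_bound hm

/-- The outputs of the `e`-th program within `s` steps do not violate monotonicity. -/
def IsMonotoneByStage (e s : ℕ) : Prop :=
  ∀ m < s, ∀ n < s, ∀ σ ∈ (Encodable.decode m : Option (List Bool)),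
    ∀ τ ∈ (Encodable.decode n : Option (List Bool)),
    ∀ a ∈ stageOutput e s σ, ∀ b ∈ stageOutput e s τ, σ <+: τ → a <+: b

@[fun_prop]
theorem primrecPred_isMonotoneByStage {α : Type*} [Primcodable α] {e s : α → ℕ} (he : Primrec e)
    (hs : Primrec s) : PrimrecPred fun x => IsMonotoneByStage (e x) (s x) := by
  unfold IsMonotoneByStage
  fun_prop

theorem IsMonotoneByStage.isPrefix {e s : ℕ} (h : IsMonotoneByStage e s) {σ τ a b : List Bool}
    (ha : a ∈ stageOutput e s σ) (hb : b ∈ stageOutput e s τ) (hστ : σ <+: τ) : a <+: b :=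
  h _ (encode_lt_of_mem_stageOutput ha) _ (encode_lt_of_mem_stageOutput hb) σ
    (Encodable.encodek σ) τ (Encodable.encodek τ) a ha b hb hστ

/-- The output of the `e`-th program on `σ` within `s` steps, suppressed as soon as the program
is seen to violate monotonicity. -/
noncomputable def monotoneStageOutput (e : ℕ) (σ : List Bool) (s : ℕ) : Option (List Bool) :=
  if IsMonotoneByStage e s then stageOutput e s σ else none

theorem mem_monotoneStageOutput {e s : ℕ} {σ a : List Bool} :
    a ∈ monotoneStageOutput e σ s ↔ IsMonotoneByStage e s ∧ a ∈ stageOutput e s σ := by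
  unfold monotoneStageOutput
  split_ifs with h <;> simp [h]

theorem partrec₂_rfindOpt_monotoneStageOutput :
    Partrec₂ fun (e : ℕ) (σ : List Bool) => Nat.rfindOpt (monotoneStageOutput e σ) := by
  have h : Primrec fun z : (ℕ × List Bool) × ℕ => monotoneStageOutput z.1.1 z.1.2 z.2 := by
    unfold monotoneStageOutput
    fun_prop
  exact Partrec.rfindOpt h.to_comp.to₂

/-- The `e`-th monotone machine. -/
noncomputable def machine (e : ℕ) : MonoMachine where
  f σ := Nat.rfindOpt (monotoneStageOutput e σ)
  partrec := partrec₂_rfindOpt_monotoneStageOutput.comp (Computable.const e) Computable.id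
  mono := by
    intro σ τ a b hστ ha hb
    obtain ⟨s, hs⟩ := Nat.rfindOpt_spec ha
    obtain ⟨t, ht⟩ := Nat.rfindOpt_spec hb
    obtain ⟨hsmono, hs⟩ := mem_monotoneStageOutput.1 hs
    obtain ⟨htmono, ht⟩ := mem_monotoneStageOutput.1 ht
    rcases le_total s t with hle | hle
    · exact htmono.isPrefix (stageOutput_mono hle hs) ht hστ
    · exact hsmono.isPrefix hs (stageOutput_mono hle ht) hστ

theorem exists_forall_mem_f_iff_stageOutput (V : MonoMachine) :
    ∃ e, ∀ σ a, a ∈ V.f σ ↔ ∃ s, a ∈ stageOutput e s σ := by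
  obtain ⟨c, hc⟩ := exists_code_eval_encode V.partrec
  refine ⟨Encodable.encode c, fun σ a => ?_⟩
  simp only [mem_stageOutput, Denumerable.ofNat_encode]
  constructor
  · intro ha
    obtain ⟨s, hs⟩ := Code.evaln_complete.1 (hc σ ▸ Part.mem_map Encodable.encode ha)
    exact ⟨s, _, hs, Encodable.encodek a⟩
  · rintro ⟨s, m, hm, hma⟩
    have hmem := Code.evaln_sound hm
    rw [hc, Part.mem_map_iff] at hmem
    obtain ⟨b, hb, rfl⟩ := hmem
    rw [Encodable.encodek, Option.some_inj] at hma
    rwa [← hma]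

theorem exists_machine_f_eq (V : MonoMachine) : ∃ e, (machine e).f = V.f := by
  obtain ⟨e, he⟩ := exists_forall_mem_f_iff_stageOutput V
  have hmono (s : ℕ) : IsMonotoneByStage e s := fun _ _ _ _ σ _ τ _ a ha b hb hστ =>
    V.mono hστ ((he _ _).2 ⟨s, ha⟩) ((he _ _).2 ⟨s, hb⟩)
  refine ⟨e, funext fun σ => Part.ext fun a => ?_⟩
  have hstage : monotoneStageOutput e σ = fun s => stageOutput e s σ :=
    funext fun s => if_pos (hmono s)
  change a ∈ Nat.rfindOpt (monotoneStageOutput e σ) ↔ _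
  rw [he, hstage]
  exact Nat.rfindOpt_mono fun hle ha => stageOutput_mono hle ha

/-- The string `1 ⋯ 1 0` with `e` ones. -/
def unaryCode (e : ℕ) : List Bool := (List.range e).map (fun _ => true) ++ [false]

theorem length_unaryCode (e : ℕ) : (unaryCode e).length = e + 1 := by simp [unaryCode]

theorem idxOf_false_unaryCode_append (e : ℕ) (τ : List Bool) :
    (unaryCode e ++ τ).idxOf false = e := by
  rw [unaryCode, List.append_assoc, List.idxOf_append_of_notMem (by simp)]
  simp

theorem computable_unaryCode : Computable unaryCode :=
  Primrec.to_comp (by unfold unaryCode; fun_prop)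

theorem unaryCode_inj_of_isPrefix {d e : ℕ} (h : unaryCode d <+: unaryCode e) : d = e := by
  obtain ⟨ρ, h⟩ := h
  calc d = (unaryCode d ++ ρ).idxOf false := (idxOf_false_unaryCode_append d ρ).symm
    _ = (unaryCode e ++ []).idxOf false := by rw [h, List.append_nil]
    _ = e := idxOf_false_unaryCode_append e []

theorem idxOf_eq_of_isPrefix {α : Type*} [DecidableEq α] {x : α} {σ τ : List α} (h : σ <+: τ)
    (hσ : x ∈ σ) : τ.idxOf x = σ.idxOf x := by
  obtain ⟨ρ, rfl⟩ := h
  exact List.idxOf_append_of_mem hσ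

/-- The machine that runs the `e`-th monotone machine on `τ` when given `unaryCode e ++ τ`. -/
noncomputable def universalMachine : MonoMachine where
  f ρ := if false ∈ ρ then (machine (ρ.idxOf false)).f (ρ.drop (ρ.idxOf false + 1)) else Part.none
  partrec := by
    have hidx : Primrec fun ρ : List Bool => ρ.idxOf false :=
      Primrec.list_idxOf.comp (Primrec.const false) Primrec.id
    have hmem : PrimrecPred fun ρ : List Bool => false ∈ ρ := by
      simp only [← List.idxOf_lt_length_iff]
      fun_prop
    have hrun : Partrec fun ρ : List Bool =>
        (machine (ρ.idxOf false)).f (ρ.drop (ρ.idxOf false + 1)) :=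
      partrec₂_rfindOpt_monotoneStageOutput.comp hidx.to_comp (Primrec.to_comp (by fun_prop))
    refine (Partrec.cond hmem.decide.to_comp hrun Partrec.none).of_eq fun ρ => ?_
    by_cases hρ : false ∈ ρ <;> simp [hρ]
  mono := by
    intro σ τ a b h ha hb
    by_cases hσ : false ∈ σ
    · rw [if_pos hσ] at ha
      rw [if_pos (h.subset hσ), idxOf_eq_of_isPrefix h hσ] at hb
      exact (machine _).mono (h.drop _) ha hb
    · simp [hσ] at ha

theorem universalMachine_f_unaryCode_append (e : ℕ) (τ : List Bool) :
    universalMachine.f (unaryCode e ++ τ) = (machine e).f τ := by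
  have hmem : false ∈ unaryCode e ++ τ := by simp [unaryCode]
  have hdrop : (unaryCode e ++ τ).drop (e + 1) = τ := by
    rw [← length_unaryCode, List.drop_left]
  change ite _ _ _ = _
  rw [if_pos hmem, idxOf_false_unaryCode_append, hdrop]

theorem universalMono_universalMachine : UniversalMono universalMachine := by
  refine ⟨machine, unaryCode, partrec₂_rfindOpt_monotoneStageOutput, exists_machine_f_eq,
    computable_unaryCode, ?_, universalMachine_f_unaryCode_append⟩
  rintro _ ⟨d, rfl⟩ _ ⟨e, rfl⟩ h
  rw [unaryCode_inj_of_isPrefix h]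

end Enumeration

section Graft

/-- The machine that runs `U` on `τ` when given `σ ++ τ` and that runs `V` on the strings
incomparable with `σ`. It diverges on the proper prefixes of `σ`, which keeps it monotone. -/
noncomputable def MonoMachine.graft (V U : MonoMachine) (σ : List Bool) : MonoMachine where
  f τ := if σ <+: τ then U.f (τ.drop σ.length) else if τ <+: σ then Part.none else V.f τ
  partrec := by
    have habove : PrimrecPred fun τ : List Bool => σ <+: τ := by fun_prop
    have hbelow : PrimrecPred fun τ : List Bool => τ <+: σ := by fun_prop
    have hdrop : Primrec fun τ : List Bool => τ.drop σ.length := by fun_prop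
    refine (Partrec.cond habove.decide.to_comp (U.partrec.comp hdrop.to_comp)
      (Partrec.cond hbelow.decide.to_comp Partrec.none V.partrec)).of_eq fun τ => ?_
    by_cases h : σ <+: τ <;> by_cases h' : τ <+: σ <;> simp [h, h']
  mono := by
    intro ρ τ a b h ha hb
    by_cases hρ : σ <+: ρ
    · rw [if_pos hρ] at ha
      rw [if_pos (hρ.trans h)] at hb
      exact U.mono (h.drop _) ha hb
    · by_cases hρσ : ρ <+: σ
      · simp [hρ, hρσ] at ha
      · have hτ : ¬ σ <+: τ := fun hτ =>
          (List.prefix_or_prefix_of_prefix h hτ).elim hρσ hρ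
        have hτσ : ¬ τ <+: σ := fun hτσ => hρσ (h.trans hτσ)
        rw [if_neg hρ, if_neg hρσ] at ha
        rw [if_neg hτ, if_neg hτσ] at hb
        exact V.mono h ha hb

theorem graft_f_append (V U : MonoMachine) (σ τ : List Bool) :
    (V.graft U σ).f (σ ++ τ) = U.f τ := by
  simp [MonoMachine.graft]

theorem graft_f_of_not_isPrefix (V U : MonoMachine) {σ τ : List Bool} (habove : ¬ σ <+: τ)
    (hbelow : ¬ τ <+: σ) : (V.graft U σ).f τ = V.f τ := by
  simp [MonoMachine.graft, habove, hbelow]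

theorem UniversalMono.graft {U : MonoMachine} (hU : UniversalMono U) (V : MonoMachine)
    (σ : List Bool) : UniversalMono (V.graft U σ) := by
  obtain ⟨M, ρ, hM, hall, hρ, hfree, hU⟩ := hU
  refine ⟨M, fun e => σ ++ ρ e, hM, hall, ?_, ?_, fun e τ => ?_⟩
  · exact Primrec.list_append.to_comp.comp (Computable.const σ) hρ
  · rintro _ ⟨d, rfl⟩ _ ⟨e, rfl⟩ h
    simp only [hfree _ ⟨d, rfl⟩ _ ⟨e, rfl⟩ ((List.prefix_append_right_inj σ).1 h)]
  · rw [List.append_assoc, graft_f_append, hU]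

theorem infReals_graft_sdiff_cell (V U : MonoMachine) (σ : List Bool) :
    infReals (V.graft U σ) \ cell σ = infReals V \ cell σ := by
  ext x
  simp only [infReals, Set.mem_sdiff, Set.mem_ofPred_eq, and_assoc]
  refine and_congr_right fun hx => and_congr_left fun hσ => ?_
  rw [← initSeg_digits_eq_iff hx] at hσ
  rw [mem_monoINF_iff_of_le σ.length, mem_monoINF_iff_of_le (U := V) σ.length]
  refine forall_congr' fun k => exists_congr fun n => exists_congr fun a =>
    and_congr_right fun hn => ?_
  have habove : ¬ σ <+: initSeg (digits x) n := fun h => hσ (prefix_initSeg_iff.1 h).2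
  have hbelow : ¬ initSeg (digits x) n <+: σ := fun h =>
    habove (h.eq_of_length_le (by rwa [length_initSeg]) ▸ List.prefix_refl _)
  rw [graft_f_of_not_isPrefix V U habove hbelow]

theorem muR_monoINF_graft (V U : MonoMachine) (σ : List Bool) : muR (MonoINF (V.graft U σ)) =
    muR (MonoINF U) / 2 ^ σ.length + (volume (infReals V \ cell σ)).toReal := by
  rw [muR_monoINF_eq_add (graft_f_append V U σ), muR_monoINF (MonoMachine.removeCone _ _),
    infReals_removeCone, infReals_graft_sdiff_cell]

theorem UniversalMono.exists_muR_monoINF_eq_add_sub {U : MonoMachine} (hU : UniversalMono U)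
    {γ : ℝ} (hγ : HasSigma2RightCut γ) (hγ1 : γ ≤ 1) {c : ℕ} (hc : 1 / 2 ^ c ≤ γ) :
    ∃ U', UniversalMono U' ∧ muR (MonoINF U') = muR (MonoINF U) / 2 ^ c + (γ - 1 / 2 ^ c) := by
  obtain ⟨V, hV⟩ := exists_monoMachine_digits_mem_monoINF hγ
  set σ := List.replicate c false with hσ
  have hcell : cell σ = Set.Ico 0 (1 / 2 ^ c) := by
    simp [cell, binVal, hσ]
  have hlower : Set.Ico (1 / 2 ^ c) γ ⊆ infReals V \ cell σ := fun x hx => by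
    have hx01 : x ∈ Set.Ico 0 1 := ⟨le_trans (by positivity) hx.1, hx.2.trans_le hγ1⟩
    refine ⟨⟨hx01, (hV x hx01).1 hx.2⟩, fun hxσ => ?_⟩
    rw [hcell] at hxσ
    exact hx.1.not_gt hxσ.2
  have hupper : infReals V \ cell σ ⊆ Set.Icc (1 / 2 ^ c) γ := fun x hx => by
    rw [hcell] at hx
    exact ⟨not_lt.1 fun hlt => hx.2 ⟨hx.1.1.1, hlt⟩,
      not_lt.1 fun hlt => (hV x hx.1.1).2 hlt hx.1.2⟩
  have hvol : volume (infReals V \ cell σ) = ENNReal.ofReal (γ - 1 / 2 ^ c) :=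
    le_antisymm ((measure_mono hupper).trans_eq Real.volume_Icc)
      (Real.volume_Ico.symm.trans_le (measure_mono hlower))
  refine ⟨V.graft U σ, hU.graft V σ, ?_⟩
  rw [muR_monoINF_graft, hvol, ENNReal.toReal_ofReal (sub_nonneg.2 hc), hσ, List.length_replicate]

end Graft

/-! ### The Kučera–Slaman covering argument -/

section Covering

/-- The points lying above `a t - (b t - b (N + 1))` and below `a N` for some `t ≤ N`. If `a`
decreases to a point outside this set, then from each `t` on it drops at least as much as `b`. -/
def slackCover (a b : ℕ → ℝ) : Set ℝ :=
  {x | ∃ t N, t ≤ N ∧ a t - (b t - b (N + 1)) < x ∧ x < a N}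

section

variable {a b : ℕ → ℝ}

theorem slackCover_subset_iUnion_Ioc (ha : Antitone a) :
    slackCover a b ⊆ ⋃ N, Set.Ioc (b (N + 1) - partialSups (fun t => b t - a t) N)
      (b N - partialSups (fun t => b t - a t) N) := by
  set m := partialSups fun t => b t - a t with hm
  rintro x ⟨t, N, htN, hlow, hupp⟩
  have hex : ∃ n, b (n + 1) - m n < x ∧ x < a n := by
    have := le_partialSups_of_le (fun t => b t - a t) htN
    exact ⟨N, by linarith, hupp⟩
  refine Set.mem_iUnion.2 ⟨Nat.find hex, (Nat.find_spec hex).1, not_lt.1 fun hlt => ?_⟩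
  obtain ⟨-, hxa⟩ := Nat.find_spec hex
  rcases hn : Nat.find hex with _ | n
  · rw [hn, hm, partialSups_zero] at hlt
    rw [hn] at hxa
    linarith
  · have hsucc : m (n + 1) = m n ⊔ (b (n + 1) - a (n + 1)) := partialSups_add_one _ n
    rw [hn] at hlt hxa
    have hprev : b (n + 1) - m n < x := by
      rcases max_choice (m n) (b (n + 1) - a (n + 1)) with h | h <;> rw [hsucc, h] at hlt <;>
        linarith
    exact Nat.find_min hex (hn ▸ n.lt_succ_self) ⟨hprev, hxa.trans_le (ha n.le_succ)⟩

theorem volume_slackCover_le (ha : Antitone a) (hb : Antitone b) (hb0 : ∀ n, 0 ≤ b n) :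
    volume (slackCover a b) ≤ ENNReal.ofReal (b 0) := by
  refine (measure_mono (slackCover_subset_iUnion_Ioc ha)).trans ((measure_iUnion_le _).trans ?_)
  simp only [Real.volume_Ioc, sub_sub_sub_cancel_right]
  refine ENNReal.tsum_le_of_sum_range_le fun n => ?_
  rw [← ENNReal.ofReal_sum_of_nonneg fun i _ => sub_nonneg.2 (hb i.le_succ), Finset.sum_range_sub']
  exact ENNReal.ofReal_le_ofReal (sub_le_self _ (hb0 n))

theorem le_sub_of_notMem_slackCover {x y : ℝ} (hx : x ∉ slackCover a b) (hxa : ∀ n, x < a n)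
    (hb : Antitone b) (hby : ∀ z, y < z → ∃ n, b n < z) (t : ℕ) : x ≤ a t - (b t - y) := by
  suffices x - a t + b t ≤ y by linarith
  refine le_of_forall_gt_imp_ge_of_dense fun z hz => ?_
  obtain ⟨n, hn⟩ := hby z hz
  have hdrop : x ≤ a t - (b t - b (max t n + 1)) :=
    not_lt.1 fun h => hx ⟨t, max t n, le_max_left t n, h, hxa _⟩
  have := hb (show n ≤ max t n + 1 by omega)
  linarith

end

/-- `x / 2 ^ t - (y / 2 ^ t - u / 2 ^ n) / 2 ^ c < k / 2 ^ s`, stated without subtraction or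
division. -/
def DyadicGapLT (c t x y n u k s : ℕ) : Prop :=
  x * 2 ^ (s + n + c) + u * 2 ^ (s + t) < k * 2 ^ (t + n + c) + y * 2 ^ (s + n)

theorem dyadicGapLT_iff {c t x y n u k s : ℕ} : DyadicGapLT c t x y n u k s ↔
    (x : ℝ) / 2 ^ t - ((y : ℝ) / 2 ^ t / 2 ^ c - (u : ℝ) / 2 ^ n / 2 ^ c) < (k : ℝ) / 2 ^ s := by
  have hleft : ((x * 2 ^ (s + n + c) + u * 2 ^ (s + t) : ℕ) : ℝ) =
      ((x : ℝ) / 2 ^ t + (u : ℝ) / 2 ^ n / 2 ^ c) * 2 ^ (s + t + n + c) := by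
    push_cast
    field_simp
    ring
  have hright : ((k * 2 ^ (t + n + c) + y * 2 ^ (s + n) : ℕ) : ℝ) =
      ((k : ℝ) / 2 ^ s + (y : ℝ) / 2 ^ t / 2 ^ c) * 2 ^ (s + t + n + c) := by
    push_cast
    field_simp
    ring
  rw [DyadicGapLT, ← Nat.cast_lt (α := ℝ), hleft, hright, mul_lt_mul_iff_left₀ (by positivity),
    sub_sub_eq_add_sub, sub_lt_iff_lt_add]

@[fun_prop]
theorem primrecPred_dyadicGapLT {α : Type*} [Primcodable α] {c t x y n u k s : α → ℕ}
    (hc : Primrec c) (ht : Primrec t) (hx : Primrec x) (hy : Primrec y) (hn : Primrec n)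
    (hu : Primrec u) (hk : Primrec k) (hs : Primrec s) :
    PrimrecPred fun z => DyadicGapLT (c z) (t z) (x z) (y z) (n z) (u z) (k z) (s z) := by
  unfold DyadicGapLT
  fun_prop

/-- A Martin-Löf test, relative to `∅'`, whose `i`-th component is the positive part of the slack
cover of `A n / 2 ^ n` and `b n / 2 ^ n / 2 ^ (i + c₀)`. -/
def slackTest (A b : ℕ → ℕ) (c₀ : ℕ) : Set ℕ :=
  {w | ∃ t N k s, t ≤ N ∧ RatCodeGT w.unpair.2.unpair.1 k s ∧
    RatCodeLT w.unpair.2.unpair.2 (A N) N ∧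
    DyadicGapLT (w.unpair.1 + c₀) t (A t) (b t) (N + 1) (b (N + 1)) k s}

section

variable {A b : ℕ → ℕ} {α β : ℝ} {c : ℕ}

theorem isSigma2_dyadicGapLT {ι : Type*} [Primcodable ι] {c t n k s : ι → ℕ} {d : ℕ → ℕ}
    (hA : HasSigma2Graph A) (hb : HasSigma2Graph b) (hd : HasSigma2Graph d) (hc : Primrec c)
    (ht : Primrec t) (hn : Primrec n) (hk : Primrec k) (hs : Primrec s) : IsSigma2 fun z =>
      DyadicGapLT (c z) (t z) (A (t z)) (b (t z)) (n z) (d (n z)) (k z) (s z) := by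
  let gap (z : ι) (x y u : ℕ) : Prop := DyadicGapLT (c z) (t z) x y (n z) u (k z) (s z)
  have hgap : IsSigma2 fun w : ((ι × ℕ) × ℕ) × ℕ => gap w.1.1.1 w.1.1.2 w.1.2 w.2 := by
    unfold gap
    fun_prop
  exact hA.isSigma2_comp (P := fun z x => gap z x (b (t z)) (d (n z)))
    (hb.isSigma2_comp (P := fun (w : ι × ℕ) y => gap w.1 w.2 y (d (n w.1)))
      (hd.isSigma2_comp (P := fun (w : (ι × ℕ) × ℕ) u => gap w.1.1 w.1.2 w.2 u) hgap
        (f := fun w => n w.1.1) (by fun_prop)) (f := fun w => t w.1) (by fun_prop)) ht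

theorem ceIn_slackTest (hA : HasSigma2Graph A) (hb : HasSigma2Graph b) (c₀ : ℕ) :
    CeIn (iterJump 1) (slackTest A b c₀) := by
  refine ceIn_of_isSigma2 (.exists_snd (.exists_snd (.exists_snd (.exists_snd
    (.and (by fun_prop) (.and (by fun_prop) (.and ?_ ?_)))))))
  · exact hA.isSigma2_comp (P := fun (z : (((ℕ × ℕ) × ℕ) × ℕ) × ℕ) x =>
      RatCodeLT z.1.1.1.1.unpair.2.unpair.2 x z.1.1.2) (by fun_prop) (by fun_prop)
  · exact isSigma2_dyadicGapLT hA hb hb (by fun_prop) (by fun_prop) (by fun_prop) (by fun_prop)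
      (by fun_prop)

theorem testSet_slackTest (c₀ i : ℕ) : testSet (slackTest A b c₀) i =
    slackCover (fun n => (A n : ℝ) / 2 ^ n) (fun n => (b n : ℝ) / 2 ^ n / 2 ^ (i + c₀)) ∩
      Set.Ioi 0 := by
  have hpair (p q : ℚ) : Encodable.encode (p, q) =
    Nat.pair (Encodable.encode p) (Encodable.encode q) := rfl
  ext x
  simp only [testSet, slackTest, slackCover, Set.mem_ofPred_eq, Set.mem_inter_iff, Set.mem_Ioi,
    hpair, Nat.unpair_pair, ratCodeGT_encode, ratCodeLT_encode, dyadicGapLT_iff]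
  constructor
  · rintro ⟨p, q, ⟨t, N, k, s, htN, hkp, hqN, hgap⟩, hpx, hxq⟩
    have hkx := hkp.trans hpx
    exact ⟨⟨t, N, htN, hgap.trans hkx, hxq.trans hqN⟩, hkx.trans_le' (by positivity)⟩
  · rintro ⟨⟨t, N, htN, hgap, hxN⟩, hx0⟩
    obtain ⟨k, s, hk, hkx⟩ := exists_dyadic_btwn (le_max_right _ 0) (max_lt hgap hx0)
    obtain ⟨p, hkp, hpx⟩ := exists_rat_btwn hkx
    obtain ⟨q, hxq, hqN⟩ := exists_rat_btwn hxN
    exact ⟨p, q, ⟨t, N, k, s, htN, hkp, hqN, (le_max_left _ _).trans_lt hk⟩, hpx, hxq⟩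

theorem exists_notMem_slackCover (hα0 : 0 < α) (hα : MLRandomIn (iterJump 1) α)
    (hA : IsUpperApprox α A) (hb : IsUpperApprox β b) (c₀ : ℕ) : ∃ c, c₀ ≤ c ∧
      α ∉ slackCover (fun n => (A n : ℝ) / 2 ^ n) (fun n => (b n : ℝ) / 2 ^ n / 2 ^ c) := by
  have hvol (i : ℕ) : volume (testSet (slackTest A b (c₀ + 1)) i) ≤
      ENNReal.ofReal (2⁻¹ ^ i) := by
    have hanti : Antitone fun n => (b n : ℝ) / 2 ^ n / 2 ^ (i + (c₀ + 1)) := fun m n hmn => by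
      dsimp only
      gcongr ?_ / _
      exact hb.antitone hmn
    have hinit : (b 0 : ℝ) ≤ 2 := by exact_mod_cast hb.init_le
    rw [testSet_slackTest]
    refine (measure_mono Set.inter_subset_left).trans
      ((volume_slackCover_le hA.antitone hanti fun n => by positivity).trans ?_)
    refine ENNReal.ofReal_le_ofReal ?_
    calc (b 0 : ℝ) / 2 ^ 0 / 2 ^ (i + (c₀ + 1)) ≤ 2 / 2 ^ (i + 1) := by
          rw [pow_zero, div_one]
          gcongr
          · norm_num
          · omega
      _ = 2⁻¹ ^ i := by
          rw [inv_pow, pow_succ]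
          field_simp
  obtain ⟨i, hi⟩ := hα _ (ceIn_slackTest hA.graph hb.graph _) hvol
  rw [testSet_slackTest] at hi
  exact ⟨i + (c₀ + 1), by omega, fun h => hi ⟨h, hα0⟩⟩

theorem hasSigma2RightCut_add_one_sub_div (hA : IsUpperApprox α A) (hb : IsUpperApprox β b)
    (h : ∀ t, α ≤ (A t : ℝ) / 2 ^ t - ((b t : ℝ) / 2 ^ t / 2 ^ c - β / 2 ^ c)) :
    HasSigma2RightCut (α + (1 - β) / 2 ^ c) := by
  have hone : HasSigma2Graph fun _ => 1 := by
    unfold HasSigma2Graph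
    fun_prop
  have hcut : IsSigma2 fun z : ℕ × ℕ => ∃ t, DyadicGapLT c t (A t) (b t) 0 1 z.1 z.2 :=
    .exists_snd (isSigma2_dyadicGapLT hA.graph hb.graph hone (by fun_prop) (by fun_prop)
      (by fun_prop) (by fun_prop) (by fun_prop))
  refine hcut.of_iff fun ⟨k, s⟩ => ?_
  simp only [dyadicGapLT_iff, Nat.cast_one, pow_zero, div_one, sub_div]
  constructor
  · intro hk
    obtain ⟨t, ht⟩ := hA.exists_lt ((k : ℝ) / 2 ^ s - (1 / 2 ^ c - β / 2 ^ c)) (by linarith)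
    have : β / 2 ^ c < (b t : ℝ) / 2 ^ t / 2 ^ c := by
      gcongr
      exact hb.lt t
    exact ⟨t, by linarith⟩
  · rintro ⟨t, ht⟩
    linarith [h t]

end

theorem exists_hasSigma2RightCut_add {α β : ℝ} (hα0 : 0 < α) (hα2 : α < 2)
    (hα : HasSigma2RightCut α) (hrand : MLRandomIn (iterJump 1) α) (hβ0 : 0 ≤ β) (hβ2 : β < 2)
    (hβ : HasSigma2RightCut β) (c₀ : ℕ) :
    ∃ c, c₀ ≤ c ∧ HasSigma2RightCut (α + (1 - β) / 2 ^ c) := by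
  obtain ⟨A, hA⟩ := exists_isUpperApprox hα0.le hα2 hα
  obtain ⟨b, hb⟩ := exists_isUpperApprox hβ0 hβ2 hβ
  obtain ⟨c, hc, hcover⟩ := exists_notMem_slackCover hα0 hrand hA hb c₀
  refine ⟨c, hc, hasSigma2RightCut_add_one_sub_div hA hb
    (le_sub_of_notMem_slackCover hcover hA.lt (fun m n hmn => ?_) fun z hz => ?_)⟩
  · gcongr ?_ / _
    exact hb.antitone hmn
  · rw [div_lt_iff₀ (by positivity)] at hz
    obtain ⟨n, hn⟩ := hb.exists_lt _ hz
    exact ⟨n, (div_lt_iff₀ (by positivity)).2 hn⟩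

theorem exists_universalMono_muR_monoINF_eq {α : ℝ} (hα0 : 0 < α) (hα1 : α < 1)
    (hα : HasSigma2RightCut α) (hrand : MLRandomIn (iterJump 1) α) :
    ∃ U, UniversalMono U ∧ muR (MonoINF U) = α := by
  set β := muR (MonoINF universalMachine)
  have hβ0 : 0 ≤ β := muR_monoINF_nonneg _
  have hβ1 : β ≤ 1 := muR_monoINF_le_one _
  obtain ⟨c₀, hc₀⟩ := exists_pow_lt_of_lt_one (lt_min hα0 (sub_pos.2 hα1)) one_half_lt_one
  obtain ⟨c, hc, hγ⟩ := exists_hasSigma2RightCut_add hα0 (by linarith) hα hrand hβ0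
    (by linarith) (hasSigma2RightCut_muR_monoINF _) c₀
  have hsmall : (1 : ℝ) / 2 ^ c < min α (1 - α) := by
    rw [← one_div_pow]
    exact (pow_le_pow_of_le_one (by norm_num) (by norm_num) hc).trans_lt hc₀
  obtain ⟨hcα, hcα'⟩ := lt_min_iff.1 hsmall
  have hβc0 : 0 ≤ β / 2 ^ c := by positivity
  have hβc1 : β / 2 ^ c ≤ 1 / 2 ^ c := by gcongr
  rw [sub_div] at hγ
  obtain ⟨U, hU, hUα⟩ := universalMono_universalMachine.exists_muR_monoINF_eq_add_sub hγ
    (c := c) (by linarith) (by linarith)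
  exact ⟨U, hU, by rw [hUα]; ring⟩

end Covering

/-- **Infinity probability for universal monotone machines.**
The probability that the output of a universal monotone machine on a random infinite
binary input is infinite is a 2-random `∅'`-right-c.e. real; conversely, every 2-random
`∅'`-right-c.e. real in `(0,1)` is such a probability for some universal monotone machine. -/
theorem monotone_infinity_probability_characterization :
    (∀ U : MonoMachine, UniversalMono U →
        NRandom 2 (muR (MonoINF U)) ∧ RightCeIn (iterJump 1) (muR (MonoINF U))) ∧
    (∀ α : ℝ, 0 < α → α < 1 → NRandom 2 α → RightCeIn (iterJump 1) α →
        ∃ U : MonoMachine, UniversalMono U ∧ muR (MonoINF U) = α) := by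
  refine ⟨fun U hU => ⟨hU.nRandom_two, ?_⟩, fun α hα0 hα1 hrand hα => ?_⟩
  · exact rightCeIn_of_hasSigma2RightCut (muR_monoINF_nonneg U) (hasSigma2RightCut_muR_monoINF U)
  · exact exists_universalMono_muR_monoINF_eq hα0 hα1 (hasSigma2RightCut_of_rightCeIn hα) hrand

end RandProb
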